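/- arXiv:1509.04970 — 5 statements merged into one kernel-verified Lean document; each statement's English description precedes it below -/
import Mathlib

section
/- Let G ⊆ M_n(ℂ) be an irreducible group of matrices that is block monomial with respect to a decomposition ℂ^n = V_1 ⊕ … ⊕ V_r with r > 1 and each V_i ≠ 0. Then all V_i have equal dimension n/r, and there is a simultaneous similarity of G, leaving each V_i invariant and identifying each V_i with ℂ^{n/r}, after which the set of nonzero (i,j)-block entries {P_i G P_j : G ∈ G} \ {0} is, for every pair (i,j), equal to one fixed irreducible matrix group H ⊆ M_{n/r}(ℂ). -/
open Matrix BigOperators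
open scoped Classical

noncomputable section

abbrev Mat (n : ℕ) := Matrix (Fin n) (Fin n) ℂ

/-- A set of matrices is irreducible if the only invariant subspaces are `⊥` and `⊤`. -/
def IrreducibleSet {n : ℕ} (S : Set (Mat n)) : Prop :=
  ∀ W : Submodule ℂ (Fin n → ℂ),
    (∀ A ∈ S, ∀ v ∈ W, A.mulVec v ∈ W) → W = ⊥ ∨ W = ⊤

/-- All complex eigenvalues are real. -/
def RealSpectrum {n : ℕ} (M : Mat n) : Prop :=
  ∀ z ∈ spectrum ℂ M, z.im = 0

/-- A set of matrices forming a group of invertible matrices under multiplication. -/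
def IsMatGroup {n : ℕ} (G : Set (Mat n)) : Prop :=
  (1 : Mat n) ∈ G ∧ (∀ A ∈ G, ∀ B ∈ G, A * B ∈ G) ∧
    ∀ A ∈ G, IsUnit A ∧ A⁻¹ ∈ G

/-- Monomial matrix: exactly one nonzero entry in each row and each column. -/
def IsMonomialMat {n : ℕ} (M : Mat n) : Prop :=
  (∀ i, ∃! j, M i j ≠ 0) ∧ ∀ j, ∃! i, M i j ≠ 0

/-- Pattern of a matrix: nonzero entries replaced by 1. -/
def patMat {n : ℕ} (M : Mat n) : Mat n :=
  Matrix.of fun i j => if M i j = 0 then 0 else 1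

/-- Signed permutation matrix. -/
def IsSignedPermMat {n : ℕ} (M : Mat n) : Prop :=
  IsMonomialMat M ∧ ∀ i j, M i j = 0 ∨ M i j = 1 ∨ M i j = -1

/-- Permutation matrix associated to `σ` (sending `e j` to `e (σ j)`). -/
def permMat {n : ℕ} (σ : Equiv.Perm (Fin n)) : Mat n :=
  Matrix.of fun i j => if i = σ j then 1 else 0

def IsPermMat {n : ℕ} (M : Mat n) : Prop := ∃ σ : Equiv.Perm (Fin n), M = permMat σ

/-- The cyclic permutation matrix `C_n`, sending `e i` to `e (i+1 mod n)`. -/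
def cycMat (n : ℕ) : Mat n :=
  Matrix.of fun i j => if (i : ℕ) = ((j : ℕ) + 1) % n then 1 else 0

/-- The cyclic group `𝒞_n` generated by `C_n`. -/
def cycSet (n : ℕ) : Set (Mat n) := {M | ∃ k : ℕ, M = cycMat n ^ k}

/-- Signed diagonal matrix: member of `D_n(±1)`. -/
def IsSignedDiag {n : ℕ} (M : Mat n) : Prop :=
  ∃ d : Fin n → ℂ, (∀ i, d i = 1 ∨ d i = -1) ∧ M = Matrix.diagonal d

/-- `avg_G(D) = D · D^G · … · D^(G^(m-1))` where `m = orderOf G` and `D^G = G⁻¹ D G`. -/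
def avgMat {n : ℕ} (G D : Mat n) : Mat n :=
  ((List.range (orderOf G)).map fun k => (G ^ k)⁻¹ * D * G ^ k).prod

/-- `J_K = {J ∈ D_n(±1) : avg_G(J) = det(J)·I for all G ∈ K \ {I}}`. -/
def Jset {n : ℕ} (K : Set (Mat n)) : Set (Mat n) :=
  {J | IsSignedDiag J ∧ ∀ G ∈ K, G ≠ 1 → avgMat G J = J.det • (1 : Mat n)}

/-- `J_K^+ = {J ∈ J_K : det J = 1}`. -/
def JsetPlus {n : ℕ} (K : Set (Mat n)) : Set (Mat n) :=
  {J | J ∈ Jset K ∧ J.det = 1}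

/-- Realizable: simultaneously similar to a set of real-entried matrices. -/
def Realizable {n : ℕ} (S : Set (Mat n)) : Prop :=
  ∃ T : Mat n, IsUnit T ∧ ∀ A ∈ S, ∀ i j, ((T⁻¹ * A * T) i j).im = 0

/-- Indecomposable: no common invariant standard subspace except `0` and `ℂ^n`. -/
def IndecomposableSet {n : ℕ} (S : Set (Mat n)) : Prop :=
  ∀ I : Set (Fin n),
    (∀ A ∈ S, ∀ j ∈ I, ∀ i, A i j ≠ 0 → i ∈ I) → I = ∅ ∨ I = Set.univ

/-- Kronecker product, identified with a matrix over `Fin (m*n)` canonically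
(first factor's index is the block index). -/
def kron {m n : ℕ} (A : Mat m) (B : Mat n) : Mat (m * n) :=
  Matrix.reindex finProdFinEquiv finProdFinEquiv (Matrix.kroneckerMap (· * ·) A B)

end

/-!
This is Clifford's argument on the lattice of submodules. The sum of the translates `g • W` of a
nonzero submodule is invariant, hence everything. For `W = V i` this forces the group to permute the
blocks transitively. For `W ≤ V i` invariant under the stabilizer of `V i`, every translate of `W`
lies in `W` or in a block other than `V i`, so the modular law gives `W = V i`: the stabilizer acts
irreducibly on `V i`. Choosing `t i` with `t i • V i₀ = V i` identifies all blocks with `V i₀`, and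
a nonzero `(i, j)`-block of `g` then becomes the action on `V i₀` of `(t i)⁻¹ * g * t j`, an
arbitrary element of the stabilizer of `V i₀`.
-/

section UnitGroup

variable {M N : Type*} [Monoid M] [Monoid N]

/-- A set of elements of a monoid which is a group of units under multiplication. It is used for
groups of matrices and of endomorphisms alike, and so refers to no inversion function on `M`. -/
def IsUnitGroup (S : Set M) : Prop :=
  ∃ Γ : Subgroup Mˣ, (Γ.ofUnits : Set M) = S

theorem isUnitGroup_range {Γ : Type*} [Group Γ] (f : Γ →* M) : IsUnitGroup (Set.range f) :=
  ⟨f.toHomUnits.range, by ext; simp [Subgroup.mem_ofUnits_iff]⟩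

theorem IsUnitGroup.image {F : Type*} [FunLike F M N] [MonoidHomClass F M N] {S : Set M}
    (hS : IsUnitGroup S) (f : F) : IsUnitGroup (f '' S) := by
  obtain ⟨Γ, rfl⟩ := hS
  exact ⟨Γ.map (Units.map (f : M →* N)), by ext; simp [Subgroup.mem_ofUnits_iff]⟩

theorem IsUnitGroup.ne_zero {M₀ : Type*} [MonoidWithZero M₀] [Nontrivial M₀] {S : Set M₀}
    (hS : IsUnitGroup S) {a : M₀} (ha : a ∈ S) : a ≠ 0 := by
  obtain ⟨Γ, rfl⟩ := hS
  exact (Γ.isUnit_of_mem_ofUnits ha).ne_zero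

theorem isMatGroup_iff_isUnitGroup {n : ℕ} {S : Set (Mat n)} : IsMatGroup S ↔ IsUnitGroup S := by
  constructor
  · rintro ⟨one_mem, mul_mem, unit_inv_mem⟩
    let Γ : Subgroup (Mat n)ˣ :=
      { carrier := {u | (u : Mat n) ∈ S}
        one_mem' := one_mem
        mul_mem' := fun ha hb => mul_mem _ ha _ hb
        inv_mem' := fun {u} hu => by
          rw [Set.mem_ofPred_eq, Matrix.coe_units_inv]
          exact (unit_inv_mem _ hu).2 }
    refine ⟨Γ, Set.ext fun A => ⟨?_, fun hA => ?_⟩⟩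
    · rintro ⟨u, hu, rfl⟩
      exact hu
    · obtain ⟨u, rfl⟩ := (unit_inv_mem A hA).1
      exact Γ.mem_ofUnits hA rfl
  · rintro ⟨Γ, rfl⟩
    refine ⟨one_mem _, fun A hA B hB => mul_mem hA hB, ?_⟩
    rintro _ ⟨u, hu, rfl⟩
    exact ⟨u.isUnit, u⁻¹, Γ.inv_mem hu, Matrix.coe_units_inv u⟩

end UnitGroup

section IrreducibleSet

variable {R E : Type*} [Ring R] [AddCommGroup E] [Module R E]

/-- A set of endomorphisms of a module is irreducible if its only invariant submodules are `⊥` and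
`⊤`; as in `IrreducibleSet`, the zero module is not excluded. -/
def IsIrreducibleSet (S : Set (Module.End R E)) : Prop :=
  ∀ W : Submodule R E, (∀ f ∈ S, ∀ v ∈ W, f v ∈ W) → W = ⊥ ∨ W = ⊤

theorem irreducibleSet_iff_image_toLin' {n : ℕ} {S : Set (Mat n)} :
    IrreducibleSet S ↔ IsIrreducibleSet (Matrix.toLin' '' S) := by
  simp only [IrreducibleSet, IsIrreducibleSet, Set.forall_mem_image, Matrix.toLin'_apply]

theorem range_toModuleEnd_coe_subgroup (Γ : Subgroup (Module.End R E)ˣ) :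
    Set.range (DistribMulAction.toModuleEnd R E : Γ →* Module.End R E) = Γ.ofUnits :=
  Set.ext fun _ => ⟨fun ⟨g, hg⟩ => ⟨g, g.2, hg⟩, fun ⟨g, hg, h⟩ => ⟨⟨g, hg⟩, h⟩⟩

theorem IsIrreducibleSet.range_conj {α R E F : Type*} [CommRing R] [AddCommGroup E] [Module R E]
    [AddCommGroup F] [Module R F] {f : α → Module.End R E} (hf : IsIrreducibleSet (Set.range f))
    (e : E ≃ₗ[R] F) : IsIrreducibleSet (Set.range fun a => e.conj (f a)) := by
  intro W hW
  refine (hf (W.comap e.toLinearMap) ?_).imp (fun h => ?_) fun h => ?_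
  · rintro _ ⟨a, rfl⟩ v hv
    simpa [LinearEquiv.conj_apply] using hW _ ⟨a, rfl⟩ _ hv
  · exact Submodule.comap_injective_of_surjective e.surjective
      (h.trans ((Submodule.comap_bot _).trans e.ker).symm)
  · exact Submodule.comap_injective_of_surjective e.surjective h

end IrreducibleSet

section IrreducibleAction

open scoped Pointwise

variable {R E Γ : Type*} [Ring R] [AddCommGroup E] [Module R E] [Group Γ] [DistribMulAction Γ E]
  [SMulCommClass Γ R E]

variable (R E Γ) in
/-- A linear group action is irreducible if its only invariant submodules are `⊥` and `⊤`. This is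
the form of `IsIrreducibleSet` suited to the pointwise action of the group on submodules. -/
def IsIrreducibleAction : Prop :=
  ∀ W : Submodule R E, (∀ g : Γ, g • W ≤ W) → W = ⊥ ∨ W = ⊤

theorem isIrreducibleSet_range_toModuleEnd_iff :
    IsIrreducibleSet (Set.range (DistribMulAction.toModuleEnd R E : Γ →* Module.End R E)) ↔
      IsIrreducibleAction R E Γ := by
  simp only [IsIrreducibleSet, IsIrreducibleAction, Set.forall_mem_range,
    Submodule.pointwise_smul_def, Submodule.map_le_iff_le_comap]
  rfl

theorem le_iSup_smul (Γ : Type*) [Group Γ] [DistribMulAction Γ E] [SMulCommClass Γ R E]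
    (W : Submodule R E) : W ≤ ⨆ g : Γ, g • W :=
  (one_smul Γ W).ge.trans (le_iSup (fun g : Γ => g • W) 1)

theorem IsIrreducibleAction.iSup_smul_eq_top (hirr : IsIrreducibleAction R E Γ)
    {W : Submodule R E} (hW : W ≠ ⊥) : ⨆ g : Γ, g • W = ⊤ := by
  refine (hirr (⨆ g : Γ, g • W) fun h => ?_).resolve_left fun hbot =>
    hW (le_bot_iff.1 (hbot ▸ le_iSup_smul Γ W))
  rw [Submodule.smul_iSup']
  exact iSup_le fun g => (smul_smul h g W).trans_le (le_iSup (fun g : Γ => g • W) (h * g))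

/-- The linear action of the stabilizer of a submodule `W` on `W` by restriction. -/
def stabilizerAction (W : Submodule R E) : MulAction.stabilizer Γ W →* Module.End R W where
  toFun g := (DistribSMul.toLinearMap R E (g : Γ)).restrict fun v hv =>
    (MulAction.mem_stabilizer_iff.1 g.2).le (Submodule.smul_mem_pointwise_smul v (g : Γ) W hv)
  map_one' := LinearMap.ext fun v => Subtype.ext (one_smul Γ (v : E))
  map_mul' g h := LinearMap.ext fun v => Subtype.ext (mul_smul (g : Γ) (h : Γ) (v : E))

theorem coe_stabilizerAction_apply {W : Submodule R E} (g : MulAction.stabilizer Γ W) (w : W) :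
    (stabilizerAction W g w : E) = (g : Γ) • (w : E) :=
  rfl

/-- The isomorphism from `W` onto `W' = g • W` given by acting with `g`. -/
def equivOfSMulEq {W W' : Submodule R E} {g : Γ} (h : g • W = W') : W ≃ₗ[R] W' :=
  (DistribMulAction.toLinearEquiv R E g).ofSubmodules W W' h

end IrreducibleAction

section BlockSystem

open scoped Pointwise

variable {R E ι Γ : Type*} [Ring R] [AddCommGroup E] [Module R E] [Group Γ] [DistribMulAction Γ E]
  [SMulCommClass Γ R E]

variable (Γ) in
/-- An independent family of nonzero submodules such that every group element maps each of them
into another one: the block structure of a block monomial group. The submodules need not span. -/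
structure IsBlockSystem (V : ι → Submodule R E) : Prop where
  indep : iSupIndep V
  ne_bot : ∀ i, V i ≠ ⊥
  exists_smul_le : ∀ (g : Γ) (i : ι), ∃ j, g • V i ≤ V j

namespace IsBlockSystem

variable {V : ι → Submodule R E}

theorem eq_of_le (hV : IsBlockSystem Γ V) {i j : ι} (h : V i ≤ V j) : i = j := by
  by_contra hne
  exact hV.ne_bot i (disjoint_self.1 ((hV.indep.pairwiseDisjoint hne).mono_right h))

theorem exists_smul_eq (hV : IsBlockSystem Γ V) (g : Γ) (i : ι) : ∃ j, g • V i = V j := by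
  obtain ⟨j, hj⟩ := hV.exists_smul_le g i
  obtain ⟨k, hk⟩ := hV.exists_smul_le g⁻¹ j
  have hik : V i ≤ V k := by
    simpa only [inv_smul_smul] using (smul_mono_right g⁻¹ hj).trans hk
  obtain rfl := hV.eq_of_le hik
  refine ⟨j, hj.antisymm ?_⟩
  simpa only [smul_inv_smul] using smul_mono_right g hk

theorem exists_smul_eq_of_isIrreducibleAction (hV : IsBlockSystem Γ V)
    (hirr : IsIrreducibleAction R E Γ) (i j : ι) : ∃ g : Γ, g • V i = V j := by
  by_contra! hne
  have hle (g : Γ) : g • V i ≤ ⨆ (k) (_ : k ≠ j), V k := by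
    obtain ⟨k, hk⟩ := hV.exists_smul_eq g i
    exact hk.trans_le (le_iSup₂_of_le k (fun h => hne g (h ▸ hk)) le_rfl)
  have htop : ⨆ (k) (_ : k ≠ j), V k = ⊤ :=
    top_le_iff.1 (hirr.iSup_smul_eq_top (hV.ne_bot i) ▸ iSup_le hle)
  exact hV.ne_bot j (disjoint_top.1 (htop ▸ hV.indep j))

theorem eq_of_stabilizer_le (hV : IsBlockSystem Γ V) (hirr : IsIrreducibleAction R E Γ)
    {i : ι} {W : Submodule R E} (hW : W ≠ ⊥) (hle : W ≤ V i)
    (hinv : ∀ g : Γ, g • V i = V i → g • W ≤ W) : W = V i := by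
  set U := ⨆ (k) (_ : k ≠ i), V k
  have htranslate (g : Γ) : g • W ≤ W ⊔ U := by
    obtain ⟨k, hk⟩ := hV.exists_smul_eq g i
    obtain rfl | hki := eq_or_ne k i
    · exact (hinv g hk).trans le_sup_left
    · exact ((smul_mono_right g hle).trans hk.le).trans
        (le_sup_of_le_right (le_iSup₂_of_le k hki le_rfl))
  have htop : W ⊔ U = ⊤ := top_le_iff.1 (hirr.iSup_smul_eq_top hW ▸ iSup_le htranslate)
  calc W = W ⊔ U ⊓ V i := by rw [(hV.indep i).symm.eq_bot, sup_bot_eq]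
    _ = (W ⊔ U) ⊓ V i := (sup_inf_assoc_of_le U hle).symm
    _ = V i := by rw [htop, top_inf_eq]

theorem isIrreducibleSet_range_stabilizerAction (hV : IsBlockSystem Γ V)
    (hirr : IsIrreducibleAction R E Γ) (i : ι) :
    IsIrreducibleSet (Set.range (stabilizerAction (Γ := Γ) (V i))) := by
  intro W hW
  refine or_iff_not_imp_left.2 fun hne => ?_
  have hmap : W.map (V i).subtype = V i := by
    refine hV.eq_of_stabilizer_le hirr ?_ (Submodule.map_subtype_le _ _) fun g hg => ?_
    · rwa [Ne, ← Submodule.map_bot (V i).subtype,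
        (Submodule.map_injective_of_injective (V i).injective_subtype).eq_iff]
    · rintro _ ⟨_, ⟨w, hw, rfl⟩, rfl⟩
      exact ⟨_, hW _ ⟨⟨g, hg⟩, rfl⟩ w hw, rfl⟩
  exact Submodule.map_injective_of_injective (V i).injective_subtype
    (hmap.trans (Submodule.map_subtype_top _).symm)

end IsBlockSystem

end BlockSystem

section Dimension

open scoped Pointwise

variable {K E ι Γ : Type*} [DivisionRing K] [AddCommGroup E] [Module K E] [Group Γ]
  [DistribMulAction Γ E] [SMulCommClass Γ K E] [DecidableEq ι] {V : ι → Submodule K E}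

theorem IsBlockSystem.finrank_eq_div_card [FiniteDimensional K E] [Fintype ι] [Nonempty ι]
    (hV : IsBlockSystem Γ V) (hirr : IsIrreducibleAction K E Γ)
    (hdecomp : DirectSum.IsInternal V) (i : ι) :
    Module.finrank K (V i) = Module.finrank K E / Fintype.card ι := by
  have hconst (j : ι) : Module.finrank K (V j) = Module.finrank K (V i) := by
    obtain ⟨g, hg⟩ := hV.exists_smul_eq_of_isIrreducibleAction hirr j i
    exact (equivOfSMulEq hg).finrank_eq
  have hsum : Module.finrank K E = Fintype.card ι * Module.finrank K (V i) := calc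
    Module.finrank K E = ∑ j, Module.finrank K (V j) := by
      rw [← Module.finrank_directSum]
      exact (LinearEquiv.ofBijective (DirectSum.coeLinearMap V) hdecomp).finrank_eq.symm
    _ = Fintype.card ι * Module.finrank K (V i) := by simp [hconst]
  rw [hsum, Nat.mul_div_cancel_left _ Fintype.card_pos]

end Dimension

section StabilizerMatrix

open scoped Pointwise

variable {R E ι κ Γ : Type*} [CommRing R] [AddCommGroup E] [Module R E] [Group Γ]
  [DistribMulAction Γ E] [SMulCommClass Γ R E] [Fintype κ] [DecidableEq κ]

variable (Γ) in
/-- The matrix form, in a basis `c` of the submodule `W`, of the action on `W` of its stabilizer.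
When `W` is a block of an irreducible block system, its range is the group formed by the nonzero
block entries. -/
noncomputable def stabilizerMatrix (W : Submodule R E) (c : Module.Basis κ R W) :
    MulAction.stabilizer Γ W →* Matrix κ κ R :=
  (LinearMap.toMatrixAlgEquiv c : Module.End R W →* Matrix κ κ R).comp (stabilizerAction W)

theorem stabilizerMatrix_apply (W : Submodule R E) (c : Module.Basis κ R W)
    (g : MulAction.stabilizer Γ W) (x y : κ) :
    stabilizerMatrix Γ W c g x y = c.repr (stabilizerAction W g (c y)) x :=
  LinearMap.toMatrix_apply c c _ x y

theorem toLin'_stabilizerMatrix (W : Submodule R E) (c : Module.Basis κ R W)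
    (g : MulAction.stabilizer Γ W) :
    Matrix.toLin' (stabilizerMatrix Γ W c g) = c.equivFun.conj (stabilizerAction W g) :=
  Matrix.toLin'_toMatrix' (c.equivFun.conj (stabilizerAction W g))

theorem IsBlockSystem.isIrreducibleSet_range_stabilizerMatrix {V : ι → Submodule R E}
    (hV : IsBlockSystem Γ V) (hirr : IsIrreducibleAction R E Γ) {i : ι}
    (c : Module.Basis κ R (V i)) :
    IsIrreducibleSet (Matrix.toLin' '' Set.range (stabilizerMatrix Γ (V i) c)) := by
  rw [← Set.range_comp]
  simpa only [Function.comp_def, toLin'_stabilizerMatrix]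
    using (hV.isIrreducibleSet_range_stabilizerAction hirr i).range_conj c.equivFun

end StabilizerMatrix

section TransportedBasis

open scoped Pointwise

variable {R E ι κ Γ : Type*} [Ring R] [AddCommGroup E] [Module R E] [Group Γ]
  [DistribMulAction Γ E] [SMulCommClass Γ R E] [DecidableEq ι] {V : ι → Submodule R E} {i₀ : ι}
  {t : ι → Γ}

/-- The basis of the whole module obtained from a basis of the block `V i₀` by carrying it to each
block `V i` with a chosen group element `t i`. In the coordinates of this basis every block is
identified with `V i₀`, which makes the sets of block entries independent of the position. -/
noncomputable def transportedBasis (hdecomp : DirectSum.IsInternal V)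
    (ht : ∀ i, t i • V i₀ = V i) (c : Module.Basis κ R (V i₀)) : Module.Basis (ι × κ) R E :=
  (hdecomp.collectedBasis fun i => c.map (equivOfSMulEq (ht i))).reindex
    (Equiv.sigmaEquivProd ι κ)

variable (hdecomp : DirectSum.IsInternal V) (ht : ∀ i, t i • V i₀ = V i)
  (c : Module.Basis κ R (V i₀))

theorem transportedBasis_apply (i : ι) (x : κ) :
    transportedBasis hdecomp ht c (i, x) = t i • (c x : E) := by
  simp [transportedBasis, equivOfSMulEq]

theorem transportedBasis_repr_smul (i : ι) (w : V i₀) (x : κ) :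
    (transportedBasis hdecomp ht c).repr (t i • (w : E)) (i, x) = c.repr w x := by
  have hmem : t i • (w : E) ∈ V i := (ht i).le (Submodule.smul_mem_pointwise_smul _ _ _ w.2)
  have hw : (equivOfSMulEq (ht i)).symm ⟨t i • (w : E), hmem⟩ = w :=
    (LinearEquiv.symm_apply_eq _).2 rfl
  rw [transportedBasis, Module.Basis.repr_reindex_apply]
  refine (hdecomp.collectedBasis_repr_of_mem _ hmem).trans ?_
  rw [Module.Basis.map_repr, LinearEquiv.trans_apply, hw]

theorem transportedBasis_repr_of_mem_ne {i k : ι} (hki : k ≠ i) {v : E} (hv : v ∈ V i) (x : κ) :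
    (transportedBasis hdecomp ht c).repr v (k, x) = 0 := by
  rw [transportedBasis, Module.Basis.repr_reindex_apply]
  exact hdecomp.collectedBasis_repr_of_mem_ne _ hki.symm hv

theorem mem_iff_transportedBasis_repr_eq_zero {i : ι} {v : E} :
    v ∈ V i ↔ ∀ q : ι × κ, q.1 ≠ i → (transportedBasis hdecomp ht c).repr v q = 0 := by
  refine ⟨fun hv q hq => transportedBasis_repr_of_mem_ne hdecomp ht c hq hv q.2, fun h => ?_⟩
  rw [← (transportedBasis hdecomp ht c).linearCombination_repr v, Finsupp.linearCombination_apply]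
  refine Submodule.sum_mem _ fun q hq => Submodule.smul_mem _ _ ?_
  obtain rfl : q.1 = i := by
    by_contra hne
    exact Finsupp.mem_support_iff.1 hq (h q hne)
  rw [← Prod.mk.eta (p := q), transportedBasis_apply]
  exact (ht q.1).le (Submodule.smul_mem_pointwise_smul _ _ _ (c q.2).2)

end TransportedBasis

section Blocks

open scoped Pointwise

variable {R E ι κ Γ : Type*} [CommRing R] [AddCommGroup E] [Module R E] [Group Γ]
  [DistribMulAction Γ E] [SMulCommClass Γ R E] [DecidableEq ι] [Fintype ι] [DecidableEq κ]
  [Fintype κ] {V : ι → Submodule R E} {i₀ : ι} {t : ι → Γ}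

/-- The `(i, j)`-block of the matrix of the endomorphism `f` in the coordinates `φ`. It represents
`P_i f P_j` when `φ` maps the summands of a decomposition to the coordinate blocks. -/
def blockEntry (φ : E ≃ₗ[R] (ι × κ → R)) (f : Module.End R E) (i j : ι) : Matrix κ κ R :=
  Matrix.of fun x y =>
    LinearMap.toMatrix' ((φ.toLinearMap ∘ₗ f) ∘ₗ φ.symm.toLinearMap) (i, x) (j, y)

theorem blockEntry_equivFun_apply (β : Module.Basis (ι × κ) R E) (f : Module.End R E) (i j : ι)
    (x y : κ) : blockEntry β.equivFun f i j x y = β.repr (f (β (j, y))) (i, x) := by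
  simp [blockEntry, LinearMap.toMatrix'_apply]

variable (hdecomp : DirectSum.IsInternal V) (ht : ∀ i, t i • V i₀ = V i)
  (c : Module.Basis κ R (V i₀))

theorem blockEntry_transportedBasis_of_ne {i j k : ι} {g : Γ} (hg : g • V j = V k)
    (hik : i ≠ k) :
    blockEntry (transportedBasis hdecomp ht c).equivFun (DistribMulAction.toModuleEnd R E g) i j
      = 0 := by
  ext x y
  rw [blockEntry_equivFun_apply, transportedBasis_apply]
  refine transportedBasis_repr_of_mem_ne hdecomp ht c hik (hg.le ?_) x
  exact Submodule.smul_mem_pointwise_smul _ _ _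
    ((ht j).le (Submodule.smul_mem_pointwise_smul _ _ _ (c y).2))

theorem blockEntry_transportedBasis_mul_mul_inv (i j : ι) (h : MulAction.stabilizer Γ (V i₀)) :
    blockEntry (transportedBasis hdecomp ht c).equivFun
      (DistribMulAction.toModuleEnd R E (t i * h * (t j)⁻¹)) i j =
        stabilizerMatrix Γ (V i₀) c h := by
  ext x y
  rw [blockEntry_equivFun_apply, transportedBasis_apply, stabilizerMatrix_apply,
    ← transportedBasis_repr_smul hdecomp ht c i, coe_stabilizerAction_apply]
  simp only [DistribMulAction.toModuleEnd_apply, DistribSMul.toLinearMap_apply, mul_smul,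
    inv_smul_smul]

theorem IsBlockSystem.setOf_blockEntry_ne_zero [Nontrivial R] [Nonempty κ]
    (hV : IsBlockSystem Γ V) (i j : ι) :
    {B | B ≠ 0 ∧ ∃ f ∈ Set.range (DistribMulAction.toModuleEnd R E : Γ →* Module.End R E),
      B = blockEntry (transportedBasis hdecomp ht c).equivFun f i j} =
      Set.range (stabilizerMatrix Γ (V i₀) c) := by
  refine Set.Subset.antisymm ?_ ?_
  · rintro _ ⟨hB, _, ⟨g, rfl⟩, rfl⟩
    obtain ⟨k, hk⟩ := hV.exists_smul_eq g j
    obtain rfl : i = k := by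
      by_contra hik
      exact hB (blockEntry_transportedBasis_of_ne hdecomp ht c hk hik)
    have hstab : (t i)⁻¹ * g * t j ∈ MulAction.stabilizer Γ (V i₀) := by
      rw [MulAction.mem_stabilizer_iff, mul_smul, mul_smul, ht, hk, inv_smul_eq_iff, ht]
    have hg : t i * ((t i)⁻¹ * g * t j) * (t j)⁻¹ = g := by group
    refine ⟨⟨_, hstab⟩, ?_⟩
    rw [← blockEntry_transportedBasis_mul_mul_inv hdecomp ht c i j, hg]
  · rintro _ ⟨h, rfl⟩
    exact ⟨(isUnitGroup_range (stabilizerMatrix Γ (V i₀) c)).ne_zero ⟨h, rfl⟩, _, ⟨_, rfl⟩,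
      (blockEntry_transportedBasis_mul_mul_inv hdecomp ht c i j h).symm⟩

end Blocks

theorem stmt5_general {K E ι : Type*} [Field K] [AddCommGroup E] [Module K E]
    [FiniteDimensional K E] [Fintype ι] [DecidableEq ι] [Nonempty ι] {d : ℕ}
    (hd : Module.finrank K E / Fintype.card ι = d) {G : Set (Module.End K E)}
    (hgrp : IsUnitGroup G) (hirr : IsIrreducibleSet G) {V : ι → Submodule K E}
    (hdecomp : DirectSum.IsInternal V) (hV : ∀ i, V i ≠ ⊥)
    (hbm : ∀ f ∈ G, ∀ i, ∃ j, ∀ v ∈ V i, f v ∈ V j) :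
    (∀ i, Module.finrank K (V i) = d) ∧
    ∃ (φ : E ≃ₗ[K] (ι × Fin d → K)) (H : Set (Matrix (Fin d) (Fin d) K)),
      (∀ i, ∀ v : E, v ∈ V i ↔ ∀ q : ι × Fin d, q.1 ≠ i → φ v q = 0) ∧
      IsUnitGroup H ∧ IsIrreducibleSet (Matrix.toLin' '' H) ∧
      ∀ i j, {B | B ≠ 0 ∧ ∃ f ∈ G, B = blockEntry φ f i j} = H := by
  obtain ⟨Γ, rfl⟩ := hgrp
  have hblocks : IsBlockSystem Γ V :=
    ⟨hdecomp.submodule_iSupIndep, hV, fun g i =>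
      (hbm _ ⟨g, g.2, rfl⟩ i).imp fun _ h => Submodule.map_le_iff_le_comap.2 h⟩
  rw [← range_toModuleEnd_coe_subgroup] at hirr ⊢
  rw [isIrreducibleSet_range_toModuleEnd_iff] at hirr
  have hfin (i : ι) : Module.finrank K (V i) = d :=
    (hblocks.finrank_eq_div_card hirr hdecomp i).trans hd
  let i₀ : ι := Classical.arbitrary ι
  let c := Module.finBasisOfFinrankEq K (V i₀) (hfin i₀)
  choose t ht using hblocks.exists_smul_eq_of_isIrreducibleAction hirr i₀
  have : Nontrivial (V i₀) := Submodule.nontrivial_iff_ne_bot.2 (hV i₀)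
  have : Nonempty (Fin d) := c.index_nonempty
  exact ⟨hfin, (transportedBasis hdecomp ht c).equivFun, Set.range (stabilizerMatrix Γ (V i₀) c),
    fun _ _ => mem_iff_transportedBasis_repr_eq_zero hdecomp ht c, isUnitGroup_range _,
    hblocks.isIrreducibleSet_range_stabilizerMatrix hirr c,
    hblocks.setOf_blockEntry_ne_zero hdecomp ht c⟩

/-- structure of an irreducible group that is block monomial with respect
to a direct sum decomposition `ℂ^n = V_1 ⊕ … ⊕ V_r`, `r > 1`, all `V_i ≠ 0`:
the `V_i` all have dimension `n/r` and, after a simultaneous similarity leaving each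
`V_i` invariant and identifying each `V_i` with `ℂ^{n/r}` (encoded by a linear
equivalence `φ` carrying each `V_i` onto the `i`-th coordinate block), the set of
nonzero `(i,j)`-block entries is, for every `(i,j)`, one fixed irreducible group `H`. -/
theorem stmt5 {n r : ℕ} (hr : 1 < r) (G : Set (Mat n)) (hgrp : IsMatGroup G)
    (hirr : IrreducibleSet G)
    (V : Fin r → Submodule ℂ (Fin n → ℂ))
    (hdecomp : DirectSum.IsInternal V)
    (hV : ∀ i, V i ≠ ⊥)
    (hbm : ∀ A ∈ G, ∀ i, ∃ j, ∀ v ∈ V i, A.mulVec v ∈ V j) :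
    (∀ i, Module.finrank ℂ (V i) = n / r) ∧
    ∃ (φ : (Fin n → ℂ) ≃ₗ[ℂ] (Fin r × Fin (n / r) → ℂ))
      (H : Set (Matrix (Fin (n / r)) (Fin (n / r)) ℂ)),
      (∀ i, ∀ v : Fin n → ℂ,
        v ∈ V i ↔ ∀ q : Fin r × Fin (n / r), q.1 ≠ i → φ v q = 0) ∧
      IsMatGroup H ∧ IrreducibleSet H ∧
      ∀ i j : Fin r,
        {B : Matrix (Fin (n / r)) (Fin (n / r)) ℂ | B ≠ 0 ∧ ∃ A ∈ G,
          B = Matrix.of fun x y =>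
            LinearMap.toMatrix'
              ((φ.toLinearMap ∘ₗ Matrix.mulVecLin A) ∘ₗ φ.symm.toLinearMap)
              (i, x) (j, y)} = H := by
  have : Nonempty (Fin r) := ⟨0, by lia⟩
  simpa only [isMatGroup_iff_isUnitGroup, irreducibleSet_iff_image_toLin', Set.exists_mem_image,
    blockEntry, Matrix.toLin'_apply'] using stmt5_general (G := Matrix.toLin' '' G) (d := n / r)
      (by simp) ((isMatGroup_iff_isUnitGroup.1 hgrp).image Matrix.toLinAlgEquiv')
      (irreducibleSet_iff_image_toLin'.1 hirr) hdecomp hV (Set.forall_mem_image.2 hbm)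
end

section
/- (Clifford's theorem, block-monomial form) Let G ⊆ M_n(ℂ) be an irreducible group and let N be a reducible normal subgroup of G such that there is no similarity under which N = I_m ⊗ N_0 for some irreducible group N_0 ⊆ M_{n/m}(ℂ). Let V_1, …, V_r be the maximal N-invariant subspaces of ℂ^n on each of which all irreducible subrepresentations of N are pairwise isomorphic. Then r > 1, dim V_i = n/r for each i, ℂ^n = V_1 ⊕ … ⊕ V_r, G is block monomial with respect to this decomposition, and after a further simultaneous similarity the set of nonzero (i,j)-block entries of G is, for every pair (i,j), equal to one fixed irreducible group H ⊆ M_{n/r}(ℂ). -/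
open Matrix BigOperators
open scoped Classical

/-- `W` is invariant under every member of `S`. -/
def InvariantUnder {n : ℕ} (S : Set (Mat n)) (W : Submodule ℂ (Fin n → ℂ)) : Prop :=
  ∀ A ∈ S, ∀ v ∈ W, A.mulVec v ∈ W

/-- `U` is an irreducible subrepresentation of `S`. -/
def IsIrredSubrep {n : ℕ} (S : Set (Mat n)) (U : Submodule ℂ (Fin n → ℂ)) : Prop :=
  InvariantUnder S U ∧ U ≠ ⊥ ∧
    ∀ U' : Submodule ℂ (Fin n → ℂ), U' ≤ U → InvariantUnder S U' → U' = ⊥ ∨ U' = U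

/-- The subrepresentations `U` and `U'` of `S` are isomorphic: there is a linear map
that is injective on `U`, carries `U` onto `U'`, and intertwines the action on `U`. -/
def RepIso {n : ℕ} (S : Set (Mat n)) (U U' : Submodule ℂ (Fin n → ℂ)) : Prop :=
  ∃ f : (Fin n → ℂ) →ₗ[ℂ] (Fin n → ℂ),
    Submodule.map f U = U' ∧ Disjoint (LinearMap.ker f) U ∧
    ∀ A ∈ S, ∀ v ∈ U, f (A.mulVec v) = A.mulVec (f v)

/-- `W` is invariant under `S` and all irreducible subrepresentations of `S` on `W`
are pairwise isomorphic. -/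
def IsotypicUnder {n : ℕ} (S : Set (Mat n)) (W : Submodule ℂ (Fin n → ℂ)) : Prop :=
  InvariantUnder S W ∧
    ∀ U U' : Submodule ℂ (Fin n → ℂ), U ≤ W → U' ≤ W →
      IsIrredSubrep S U → IsIrredSubrep S U' → RepIso S U U'

/-!
Let `A` be the algebra generated by `N`. Since `G` normalizes `N`, each `g ∈ G` is a semilinear
automorphism of the `A`-module `ℂ^n`, along conjugation by `g` on `A`; hence it preserves the socle
and permutes the isotypic components. As `G` is irreducible, the socle is everything, so `ℂ^n` is
semisimple and its isotypic components form a system of imprimitivity, on which `G` is transitive.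
If there were only one component, then `ℂ^n ≅ Q^m` with `Q` simple, and `N` would be `I_m ⊗ N_0`.
For a subspace `W` of `V i` invariant under the stabilizer of `V i`, the translates of `W` lie in
`W ⊔ ⨆ j ≠ i, V j`, so the stabilizer acts irreducibly on `V i`. In a basis that translates a basis
of `V i₀` by chosen `γ i` with `γ i • V i₀ = V i`, a nonzero `(i, j)` block of `g` is the matrix of
`(γ i)⁻¹ * g * γ j`, which stabilizes `V i₀`.
-/

section Semilinear

variable {R R' M M' : Type*} [Ring R] [Ring R'] [AddCommGroup M] [AddCommGroup M']
  [Module R M] [Module R' M'] {σ : R →+* R'} {σ' : R' →+* R} [RingHomInvPair σ σ']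
  [RingHomInvPair σ' σ]

theorem isSimpleModule_map_iff (e : M ≃ₛₗ[σ] M') (P : Submodule R M) :
    IsSimpleModule R' (P.map e.toLinearMap) ↔ IsSimpleModule R P := by
  simp only [isSimpleModule_iff_isAtom]
  exact (Submodule.orderIsoMapComap e).isAtom_iff P

theorem nonempty_linearEquiv_map_iff (e : M ≃ₛₗ[σ] M') (P Q : Submodule R M) :
    Nonempty (P.map e.toLinearMap ≃ₗ[R'] Q.map e.toLinearMap) ↔ Nonempty (P ≃ₗ[R] Q) :=
  ⟨fun ⟨f⟩ => ⟨((e.submoduleMap P).trans f).trans (e.submoduleMap Q).symm⟩,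
    fun ⟨f⟩ => ⟨((e.submoduleMap P).symm.trans f).trans (e.submoduleMap Q)⟩⟩

theorem map_isotypicComponent (e : M ≃ₛₗ[σ] M') (P : Submodule R M) :
    (isotypicComponent R M P).map e.toLinearMap =
      isotypicComponent R' M' (P.map e.toLinearMap) := by
  have hset : {Q' : Submodule R' M' | Nonempty (Q' ≃ₗ[R'] P.map e.toLinearMap)} =
      Submodule.orderIsoMapComap e '' {Q | Nonempty (Q ≃ₗ[R] P)} := by
    ext Q'
    obtain ⟨Q, rfl⟩ := (Submodule.orderIsoMapComap e).surjective Q'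
    rw [(Submodule.orderIsoMapComap e).injective.mem_set_image]
    exact nonempty_linearEquiv_map_iff e Q P
  rw [isotypicComponent, isotypicComponent, hset, sSup_image]
  exact (Submodule.orderIsoMapComap e).map_sSup _

theorem map_mem_isotypicComponents (e : M ≃ₛₗ[σ] M') {P : Submodule R M}
    (hP : P ∈ isotypicComponents R M) : P.map e.toLinearMap ∈ isotypicComponents R' M' := by
  obtain ⟨Q, hQ, rfl⟩ := hP
  exact ⟨Q.map e.toLinearMap, (isSimpleModule_map_iff e Q).2 hQ, map_isotypicComponent e Q⟩

theorem map_sSup_simples_le (e : M ≃ₛₗ[σ] M') :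
    (sSup {P : Submodule R M | IsSimpleModule R P}).map e.toLinearMap ≤
      sSup {P : Submodule R' M' | IsSimpleModule R' P} := by
  rw [Submodule.map_le_iff_le_comap]
  refine sSup_le fun P hP => ?_
  rw [← Submodule.map_le_iff_le_comap]
  exact le_sSup ((isSimpleModule_map_iff e P).2 hP)

end Semilinear

section Isotypic

variable {R M : Type*} [Ring R] [AddCommGroup M] [Module R M] [IsSemisimpleModule R M]

theorem exists_le_isotypicComponents_of_isIsotypic [Nontrivial M] {P : Submodule R M}
    (hP : IsIsotypic R P) :
    ∃ c ∈ isotypicComponents R M, P ≤ c := by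
  have hsimple (Q : Submodule R M) (hQ : IsSimpleModule R Q) (h : IsIsotypicOfType R P Q) :
      ∃ c ∈ isotypicComponents R M, P ≤ c :=
    ⟨isotypicComponent R M Q, ⟨Q, hQ, rfl⟩, le_isotypicComponent_iff.2 h⟩
  obtain rfl | ⟨Q, hQP, hQ⟩ := IsSemisimpleModule.eq_bot_or_exists_simple_le P
  · obtain ⟨Q, hQ⟩ := IsAtomic.exists_atom (Submodule R M)
    have := isSimpleModule_iff_isAtom.2 hQ
    exact hsimple Q this (le_isotypicComponent_iff.1 bot_le)
  · exact hsimple Q hQ (isIsotypic_submodule_iff.1 hP Q hQP)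

theorem maximal_isIsotypic_iff [Nontrivial M] {P : Submodule R M} :
    Maximal (fun Q : Submodule R M => IsIsotypic R Q) P ↔ P ∈ isotypicComponents R M := by
  refine ⟨fun hP => ?_, fun hP => ⟨.isotypicComponents hP, fun Q hQ hPQ => ?_⟩⟩
  · obtain ⟨c, hc, hPc⟩ := exists_le_isotypicComponents_of_isIsotypic hP.prop
    rwa [hP.eq_of_le (.isotypicComponents hc) hPc]
  · obtain ⟨Q₀, hQ₀, rfl⟩ := hP
    exact le_isotypicComponent_iff.2
      (isIsotypic_submodule_iff.1 hQ Q₀ (Q₀.le_isotypicComponent.trans hPQ))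

end Isotypic

section EndomorphismAlgebra

attribute [local instance] RingHomInvPair.of_ringEquiv RingHomInvPair.of_ringEquiv_symm

variable {K E E' : Type*} [Field K] [AddCommGroup E] [Module K E] [AddCommGroup E'] [Module K E']

/-- The isotypic components of `E` under an algebra `A` of endomorphisms, as subspaces over the
ground field, so that components for different algebras can be compared. -/
def isotypicComponentSubspaces (A : Subalgebra K (Module.End K E)) : Set (Submodule K E) :=
  Submodule.restrictScalars K '' isotypicComponents A E

/-- The sum of the simple submodules of `E` over an algebra `A` of endomorphisms, as a subspace
over the ground field. -/
def socleSubspace (A : Subalgebra K (Module.End K E)) : Submodule K E :=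
  (sSup {P : Submodule A E | IsSimpleModule A P}).restrictScalars K

/-- A linear isomorphism `E ≃ E'`, seen as a semilinear isomorphism from `E` as an `A`-module to
`E'` as a module over the conjugated algebra. -/
def conjSemilinearEquiv (A : Subalgebra K (Module.End K E)) (e : E ≃ₗ[K] E') :
    E ≃ₛₗ[(((e.conjAlgEquiv K).subalgebraMap A).toRingEquiv :
      A →+* A.map (e.conjAlgEquiv K).toAlgHom)] E' where
  __ := e
  map_smul' a v := congrArg (e <| (a : Module.End K E) ·) (e.symm_apply_apply v).symm

theorem sSupIndep_isotypicComponentSubspaces (A : Subalgebra K (Module.End K E))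
    [IsSemisimpleModule A E] :
    sSupIndep (isotypicComponentSubspaces A) := by
  rintro _ ⟨P, hP, rfl⟩
  have hindep := (sSupIndep_isotypicComponents A E hP).eq_bot
  rw [isotypicComponentSubspaces, ← Set.image_singleton,
    ← Set.image_sdiff (Submodule.restrictScalars_injective K A E), ← Submodule.restrictScalars_sSup,
    disjoint_iff, ← Submodule.restrictScalars_inf, hindep, Submodule.restrictScalars_bot]

theorem sSup_isotypicComponentSubspaces (A : Subalgebra K (Module.End K E))
    [IsSemisimpleModule A E] :
    sSup (isotypicComponentSubspaces A) = ⊤ := by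
  rw [isotypicComponentSubspaces, ← Submodule.restrictScalars_sSup, sSup_isotypicComponents,
    Submodule.restrictScalars_top]

theorem ne_bot_of_mem_isotypicComponentSubspaces {A : Subalgebra K (Module.End K E)}
    {W : Submodule K E} (hW : W ∈ isotypicComponentSubspaces A) : W ≠ ⊥ := by
  obtain ⟨P, hP, rfl⟩ := hW
  rw [Ne, Submodule.restrictScalars_eq_bot_iff]
  exact (bot_lt_isotypicComponents hP).ne'

theorem map_mem_isotypicComponentSubspaces {A : Subalgebra K (Module.End K E)} (e : E ≃ₗ[K] E')
    {W : Submodule K E} (hW : W ∈ isotypicComponentSubspaces A) :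
    W.map e.toLinearMap ∈ isotypicComponentSubspaces (A.map (e.conjAlgEquiv K).toAlgHom) := by
  obtain ⟨P, hP, rfl⟩ := hW
  exact ⟨_, map_mem_isotypicComponents (conjSemilinearEquiv A e) hP, rfl⟩

theorem map_socleSubspace_le (A : Subalgebra K (Module.End K E)) (e : E ≃ₗ[K] E') :
    (socleSubspace A).map e.toLinearMap ≤
      socleSubspace (A.map (e.conjAlgEquiv K).toAlgHom) :=
  map_sSup_simples_le (conjSemilinearEquiv A e)

end EndomorphismAlgebra

section Irreducible

variable {K E E' : Type*} [Field K] [AddCommGroup E] [Module K E] [AddCommGroup E'] [Module K E']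

/-- A set of endomorphisms of `E` is irreducible if it leaves invariant no subspace other than `⊥`
and `⊤`; this is the coordinate-free counterpart of `IrreducibleSet`. As there, the zero space is
allowed. -/
def ActsIrreducibly (S : Set (Module.End K E)) : Prop :=
  ∀ W : Submodule K E, (∀ f ∈ S, W ∈ f.invtSubmodule) → W = ⊥ ∨ W = ⊤

theorem actsIrreducibly_image_conj_iff (e : E ≃ₗ[K] E') (S : Set (Module.End K E)) :
    ActsIrreducibly (e.conj '' S) ↔ ActsIrreducibly S := by
  rw [ActsIrreducibly, (Submodule.orderIsoMapComap e).surjective.forall]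
  refine forall_congr' fun W => imp_congr ?_ (or_congr ?_ ?_)
  · rw [Set.forall_mem_image]
    exact forall₂_congr fun f _ => e.map_mem_invtSubmodule_conj_iff
  · exact map_eq_bot_iff (Submodule.orderIsoMapComap e)
  · exact map_eq_top_iff (Submodule.orderIsoMapComap e)

theorem actsIrreducibly_image_toLin'_toMatrix_iff {κ : Type*} [Fintype κ] [DecidableEq κ]
    (b : Module.Basis κ K E) (S : Set (Module.End K E)) :
    ActsIrreducibly (Matrix.toLin' '' (LinearMap.toMatrix b b '' S)) ↔ ActsIrreducibly S := by
  rw [← actsIrreducibly_image_conj_iff b.equivFun, Set.image_image]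
  have (f : Module.End K E) : Matrix.toLin' (LinearMap.toMatrix b b f) = b.equivFun.conj f :=
    Matrix.toLin'_toMatrix' _
  simp_rw [this]

end Irreducible

section AdjoinModules

variable {K E : Type*} [Field K] [AddCommGroup E] [Module K E] {S : Set (Module.End K E)}

/-- A subspace of `E` that is a simple submodule over an algebra `A` of endomorphisms. -/
def IsSimpleSubspace (A : Subalgebra K (Module.End K E)) (W : Submodule K E) : Prop :=
  ∃ P : Submodule A E, IsSimpleModule A P ∧ P.restrictScalars K = W

/-- A subspace of `E` that is an isotypic submodule over an algebra `A` of endomorphisms. -/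
def IsIsotypicSubspace (A : Subalgebra K (Module.End K E)) (W : Submodule K E) : Prop :=
  ∃ P : Submodule A E, IsIsotypic A P ∧ P.restrictScalars K = W

theorem exists_restrictScalars_adjoin_eq_iff {W : Submodule K E} :
    (∃ P : Submodule (Algebra.adjoin K S) E, P.restrictScalars K = W) ↔
      ∀ f ∈ S, W ∈ f.invtSubmodule := by
  constructor
  · rintro ⟨P, rfl⟩ f hf v hv
    exact P.smul_mem ⟨f, Algebra.subset_adjoin hf⟩ hv
  · intro hW
    have hadjoin : ∀ a ∈ Algebra.adjoin K S, ∀ v ∈ W, a v ∈ W := fun a ha => by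
      induction ha using Algebra.adjoin_induction with
      | mem _ hf => exact hW _ hf
      | algebraMap c => exact fun v hv => W.smul_mem c hv
      | add _ _ _ _ hf hg => exact fun v hv => W.add_mem (hf v hv) (hg v hv)
      | mul _ _ _ _ hf hg => exact fun v hv => hf _ (hg v hv)
    exact ⟨{ W with smul_mem' := fun a v hv => hadjoin a a.2 v hv }, rfl⟩

theorem isSimpleSubspace_adjoin_iff {W : Submodule K E} :
    IsSimpleSubspace (Algebra.adjoin K S) W ↔
      (∀ f ∈ S, W ∈ f.invtSubmodule) ∧ W ≠ ⊥ ∧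
        ∀ W' ≤ W, (∀ f ∈ S, W' ∈ f.invtSubmodule) → W' = ⊥ ∨ W' = W := by
  constructor
  · rintro ⟨P, hP, rfl⟩
    rw [isSimpleModule_iff_isAtom] at hP
    refine ⟨exists_restrictScalars_adjoin_eq_iff.1 ⟨P, rfl⟩,
      (Submodule.restrictScalars_eq_bot_iff ..).not.2 hP.1, fun W' hle hW' => ?_⟩
    obtain ⟨P', rfl⟩ := exists_restrictScalars_adjoin_eq_iff.2 hW'
    exact (hP.le_iff.1 hle).imp (congrArg _) (congrArg _)
  · rintro ⟨hW, hbot, hmin⟩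
    obtain ⟨P, rfl⟩ := exists_restrictScalars_adjoin_eq_iff.2 hW
    refine ⟨P, isSimpleModule_iff_isAtom.2 ⟨mt (congrArg _) hbot, fun P' hlt => ?_⟩, rfl⟩
    refine Submodule.restrictScalars_injective K _ E ((hmin (P'.restrictScalars K) hlt.le
      (exists_restrictScalars_adjoin_eq_iff.1 ⟨P', rfl⟩)).resolve_right fun h => ?_)
    exact hlt.ne (Submodule.restrictScalars_injective K _ E h)

/-- A `K`-linear map of `E` that restricts to an isomorphism from `U` onto `U'` commuting with the
members of `S`. -/
def IsIntertwiningOn (S : Set (Module.End K E)) (U U' : Submodule K E) (f : Module.End K E) :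
    Prop :=
  U.map f = U' ∧ Disjoint (LinearMap.ker f) U ∧ ∀ a ∈ S, ∀ v ∈ U, f (a v) = a (f v)

theorem IsIntertwiningOn.map_apply_of_mem_adjoin {P : Submodule (Algebra.adjoin K S) E}
    {U' : Submodule K E} {f : Module.End K E} (hf : IsIntertwiningOn S (P.restrictScalars K) U' f)
    {a : Module.End K E} (ha : a ∈ Algebra.adjoin K S) : ∀ v ∈ P, f (a v) = a (f v) := by
  induction ha using Algebra.adjoin_induction with
  | mem a ha => exact hf.2.2 a ha
  | algebraMap c => exact fun v _ => f.map_smul c v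
  | add a b _ _ iha ihb =>
    exact fun v hv => (f.map_add _ _).trans (congrArg₂ (· + ·) (iha v hv) (ihb v hv))
  | mul a b _ hb iha ihb =>
    exact fun v hv => (iha _ (P.smul_mem ⟨b, hb⟩ hv)).trans (congrArg a (ihb v hv))

theorem IsIntertwiningOn.nonempty_linearEquiv {P Q : Submodule (Algebra.adjoin K S) E}
    {f : Module.End K E} (hf : IsIntertwiningOn S (P.restrictScalars K) (Q.restrictScalars K) f) :
    Nonempty (P ≃ₗ[Algebra.adjoin K S] Q) := by
  let F : P →ₗ[Algebra.adjoin K S] E :=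
    { toFun := fun v => f v
      map_add' := fun v w => f.map_add v w
      map_smul' := fun a v => hf.map_apply_of_mem_adjoin a.2 v v.2 }
  have hinj : Function.Injective F := fun v w hvw =>
    Subtype.ext (LinearMap.injOn_of_disjoint_ker le_rfl hf.2.1.symm v.2 w.2 hvw)
  have hrange : LinearMap.range F = Q := by
    refine Submodule.restrictScalars_injective K _ E (Eq.trans ?_ hf.1)
    exact LinearMap.range_domRestrict (P.restrictScalars K) f
  exact ⟨(LinearEquiv.ofInjective F hinj).trans (.ofEq _ _ hrange)⟩

theorem exists_isIntertwiningOn {P Q : Submodule (Algebra.adjoin K S) E}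
    (e : P ≃ₗ[Algebra.adjoin K S] Q) :
    ∃ f, IsIntertwiningOn S (P.restrictScalars K) (Q.restrictScalars K) f := by
  obtain ⟨f, hf⟩ := LinearMap.exists_extend (p := P.restrictScalars K)
    ((Q.restrictScalars K).subtype ∘ₗ (e.restrictScalars K).toLinearMap)
  have hfe (v : P) : f v = e v := LinearMap.congr_fun hf v
  refine ⟨f, ?_, LinearMap.disjoint_ker.2 (fun v hv hfv => ?_) |>.symm, fun a ha v hv => ?_⟩
  · ext w
    refine ⟨?_, fun hw => ⟨_, (e.symm ⟨w, hw⟩).2, ?_⟩⟩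
    · rintro ⟨v, hv, rfl⟩
      exact hfe ⟨v, hv⟩ ▸ (e ⟨v, hv⟩).2
    · exact (hfe _).trans (congrArg Subtype.val (e.apply_symm_apply _))
  · have : e ⟨v, hv⟩ = 0 := Subtype.ext ((hfe ⟨v, hv⟩).symm.trans hfv)
    exact congrArg Subtype.val (e.map_eq_zero_iff.1 this)
  · let a' : Algebra.adjoin K S := ⟨a, Algebra.subset_adjoin ha⟩
    have := hfe (a' • ⟨v, hv⟩)
    rw [e.map_smul] at this
    exact this.trans (congrArg a (hfe ⟨v, hv⟩).symm)

theorem isIsotypicSubspace_adjoin_iff {W : Submodule K E} :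
    IsIsotypicSubspace (Algebra.adjoin K S) W ↔
      (∀ f ∈ S, W ∈ f.invtSubmodule) ∧ ∀ U U', U ≤ W → U' ≤ W →
        IsSimpleSubspace (Algebra.adjoin K S) U → IsSimpleSubspace (Algebra.adjoin K S) U' →
          ∃ f, IsIntertwiningOn S U U' f := by
  constructor
  · rintro ⟨P, hP, rfl⟩
    refine ⟨exists_restrictScalars_adjoin_eq_iff.1 ⟨P, rfl⟩, ?_⟩
    rintro _ _ hUP hUP' ⟨U, hU, rfl⟩ ⟨U', hU', rfl⟩
    obtain ⟨e⟩ := isIsotypicOfType_submodule_iff.1 (isIsotypic_submodule_iff.1 hP U' hUP') U hUP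
    exact exists_isIntertwiningOn e
  · rintro ⟨hW, hiso⟩
    obtain ⟨P, rfl⟩ := exists_restrictScalars_adjoin_eq_iff.2 hW
    refine ⟨P, isIsotypic_submodule_iff.2 fun U' hUP' hU' =>
      isIsotypicOfType_submodule_iff.2 fun U hUP hU => ?_, rfl⟩
    obtain ⟨f, hf⟩ := hiso _ _ hUP hUP' ⟨U, hU, rfl⟩ ⟨U', hU', rfl⟩
    exact hf.nonempty_linearEquiv

theorem maximal_isIsotypicSubspace_iff [Nontrivial E] {A : Subalgebra K (Module.End K E)}
    [IsSemisimpleModule A E] {W : Submodule K E} :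
    Maximal (IsIsotypicSubspace A) W ↔ W ∈ isotypicComponentSubspaces A := by
  constructor
  · rintro ⟨⟨P, hP, rfl⟩, hmax⟩
    exact ⟨P, maximal_isIsotypic_iff.1 ⟨hP, fun Q hQ hPQ => hmax ⟨Q, hQ, rfl⟩ hPQ⟩, rfl⟩
  · rintro ⟨P, hP, rfl⟩
    have hmax := maximal_isIsotypic_iff.2 hP
    refine ⟨⟨P, hmax.prop, rfl⟩, ?_⟩
    rintro _ ⟨Q, hQ, rfl⟩ hPQ
    exact hmax.le_of_ge hQ hPQ

end AdjoinModules

section GroupAction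

open Pointwise

variable {K E Γ ι : Type*} [Field K] [AddCommGroup E] [Module K E] [Group Γ]
  [DistribMulAction Γ E] [SMulCommClass Γ K E]

theorem ActsIrreducibly.eq_bot_or_eq_top_of_smul_le
    (hΓ : ActsIrreducibly (Set.range (DistribMulAction.toModuleEnd K E : Γ →* Module.End K E)))
    {W : Submodule K E} (hW : ∀ g : Γ, g • W ≤ W) : W = ⊥ ∨ W = ⊤ :=
  hΓ W <| Set.forall_mem_range.2 fun g => Submodule.map_le_iff_le_comap.1 (hW g)

theorem ActsIrreducibly.iSup_smul_eq_top
    (hΓ : ActsIrreducibly (Set.range (DistribMulAction.toModuleEnd K E : Γ →* Module.End K E)))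
    {W : Submodule K E} (hW : W ≠ ⊥) : ⨆ g : Γ, g • W = ⊤ := by
  refine (hΓ.eq_bot_or_eq_top_of_smul_le fun g => ?_).resolve_left fun h => hW ?_
  · rw [Submodule.smul_iSup']
    exact iSup_le fun h => le_iSup_of_le (g * h) (mul_smul g h W).ge
  · simpa only [one_smul, le_bot_iff, h] using le_iSup (fun g : Γ => g • W) 1

theorem smul_mem_isotypicComponentSubspaces {A : Subalgebra K (Module.End K E)} {g : Γ}
    (hg : A.map ((DistribMulAction.toLinearEquiv K E g).conjAlgEquiv K).toAlgHom = A)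
    {W : Submodule K E} (hW : W ∈ isotypicComponentSubspaces A) :
    g • W ∈ isotypicComponentSubspaces A := by
  have := map_mem_isotypicComponentSubspaces (DistribMulAction.toLinearEquiv K E g) hW
  rwa [hg] at this

theorem smul_socleSubspace_le {A : Subalgebra K (Module.End K E)} {g : Γ}
    (hg : A.map ((DistribMulAction.toLinearEquiv K E g).conjAlgEquiv K).toAlgHom = A) :
    g • socleSubspace A ≤ socleSubspace A := by
  have := map_socleSubspace_le A (DistribMulAction.toLinearEquiv K E g)
  rwa [hg] at this

theorem map_conjAlgEquiv_adjoin {S : Set (Module.End K E)}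
    (hS : ∀ g : Γ, ∀ f ∈ S, (DistribMulAction.toLinearEquiv K E g).conjAlgEquiv K f ∈ S) (g : Γ) :
    (Algebra.adjoin K S).map ((DistribMulAction.toLinearEquiv K E g).conjAlgEquiv K).toAlgHom =
      Algebra.adjoin K S := by
  rw [AlgHom.map_adjoin]
  congr 1
  refine (Set.image_subset_iff.2 (hS g)).antisymm fun f hf => ⟨_, hS g⁻¹ f hf, ?_⟩
  exact LinearMap.ext fun v => (smul_inv_smul g _).trans (congrArg f (inv_smul_smul g⁻¹ v))

theorem socleSubspace_ne_bot [FiniteDimensional K E] [Nontrivial E]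
    (A : Subalgebra K (Module.End K E)) : socleSubspace A ≠ ⊥ := by
  have : IsArtinian A E := isArtinian_of_tower K inferInstance
  obtain ⟨P, hP⟩ := IsAtomic.exists_atom (Submodule A E)
  intro h
  rw [socleSubspace, Submodule.restrictScalars_eq_bot_iff] at h
  exact hP.1 (le_bot_iff.1 (h ▸ le_sSup (isSimpleModule_iff_isAtom.2 hP)))

theorem isSemisimpleModule_of_actsIrreducibly [FiniteDimensional K E] [Nontrivial E]
    {A : Subalgebra K (Module.End K E)}
    (hΓ : ActsIrreducibly (Set.range (DistribMulAction.toModuleEnd K E : Γ →* Module.End K E)))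
    (hA : ∀ g : Γ, A.map ((DistribMulAction.toLinearEquiv K E g).conjAlgEquiv K).toAlgHom = A) :
    IsSemisimpleModule A E := by
  rw [← sSup_simples_eq_top_iff_isSemisimpleModule, ← Submodule.restrictScalars_eq_top_iff K]
  exact (hΓ.eq_bot_or_eq_top_of_smul_le fun g => smul_socleSubspace_le (hA g)).resolve_left
    (socleSubspace_ne_bot A)

/-- A system of imprimitivity: a family of nonzero subspaces with direct sum `E` that are permuted
by `Γ`. -/
structure IsSystemOfImprimitivity (Γ : Type*) [Group Γ] [DistribMulAction Γ E]
    [SMulCommClass Γ K E] (V : ι → Submodule K E) : Prop where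
  iSupIndep : iSupIndep V
  iSup_eq_top : ⨆ i, V i = ⊤
  ne_bot : ∀ i, V i ≠ ⊥
  exists_smul_eq : ∀ (g : Γ) i, ∃ j, g • V i = V j

theorem isSystemOfImprimitivity_of_maximal_isIsotypicSubspace [Nontrivial E]
    {A : Subalgebra K (Module.End K E)} [IsSemisimpleModule A E]
    (hA : ∀ g : Γ, A.map ((DistribMulAction.toLinearEquiv K E g).conjAlgEquiv K).toAlgHom = A)
    {V : ι → Submodule K E} (hinj : Function.Injective V)
    (hV : Set.range V = {W | Maximal (IsIsotypicSubspace A) W}) :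
    IsSystemOfImprimitivity Γ V := by
  replace hV : Set.range V = isotypicComponentSubspaces A :=
    hV.trans (Set.ext fun _ => maximal_isIsotypicSubspace_iff)
  constructor
  · have := sSupIndep_isotypicComponentSubspaces A
    rw [← hV, sSupIndep_iff] at this
    exact this.comp (Set.rangeFactorization_injective.2 hinj)
  · rw [← sSup_range, hV, sSup_isotypicComponentSubspaces]
  · exact fun i => ne_bot_of_mem_isotypicComponentSubspaces (hV.le ⟨i, rfl⟩)
  · intro g i
    obtain ⟨j, hj⟩ := hV.ge (smul_mem_isotypicComponentSubspaces (hA g) (hV.le ⟨i, rfl⟩))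
    exact ⟨j, hj.symm⟩

namespace IsSystemOfImprimitivity

variable {V : ι → Submodule K E}

theorem isInternal [DecidableEq ι] (hV : IsSystemOfImprimitivity Γ V) : DirectSum.IsInternal V :=
  DirectSum.isInternal_submodule_of_iSupIndep_of_iSup_eq_top hV.iSupIndep hV.iSup_eq_top

theorem exists_eq_top [Nontrivial E] [Subsingleton ι] (hV : IsSystemOfImprimitivity Γ V) :
    ∃ i, V i = ⊤ := by
  obtain h | ⟨⟨i⟩⟩ := isEmpty_or_nonempty ι
  · exact absurd (iSup_of_empty V ▸ hV.iSup_eq_top) bot_ne_top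
  · refine ⟨i, top_le_iff.1 ?_⟩
    rw [← hV.iSup_eq_top]
    exact iSup_le fun j => (congrArg V (Subsingleton.elim j i)).le

theorem exists_smul_eq_of_actsIrreducibly (hV : IsSystemOfImprimitivity Γ V)
    (hΓ : ActsIrreducibly (Set.range (DistribMulAction.toModuleEnd K E : Γ →* Module.End K E)))
    (i j : ι) : ∃ g : Γ, g • V i = V j := by
  by_contra! hne
  have hle : ⨆ g : Γ, g • V i ≤ ⨆ k ≠ j, V k := iSup_le fun g => by
    obtain ⟨k, hk⟩ := hV.exists_smul_eq g i
    exact hk ▸ le_iSup₂_of_le k (fun h => hne g (h ▸ hk)) le_rfl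
  rw [hΓ.iSup_smul_eq_top (hV.ne_bot i), top_le_iff] at hle
  exact hV.ne_bot j (disjoint_top.1 (hle ▸ hV.iSupIndep j))

theorem eq_bot_or_eq_of_smul_le (hV : IsSystemOfImprimitivity Γ V)
    (hΓ : ActsIrreducibly (Set.range (DistribMulAction.toModuleEnd K E : Γ →* Module.End K E)))
    {i : ι} {W : Submodule K E} (hWi : W ≤ V i)
    (hW : ∀ g ∈ MulAction.stabilizer Γ (V i), g • W ≤ W) : W = ⊥ ∨ W = V i := by
  refine or_iff_not_imp_left.2 fun hne => hWi.antisymm ?_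
  have hle : ⨆ g : Γ, g • W ≤ W ⊔ ⨆ j ≠ i, V j := iSup_le fun g => by
    obtain ⟨j, hj⟩ := hV.exists_smul_eq g i
    obtain rfl | hji := eq_or_ne j i
    · exact le_sup_of_le_left (hW g hj)
    · exact le_sup_of_le_right (le_iSup₂_of_le j hji (hj ▸ smul_mono_right g hWi))
  rw [hΓ.iSup_smul_eq_top hne, top_le_iff] at hle
  calc V i = (W ⊔ ⨆ j ≠ i, V j) ⊓ V i := by rw [hle, top_inf_eq]
    _ = W ⊔ (⨆ j ≠ i, V j) ⊓ V i := sup_inf_assoc_of_le _ hWi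
    _ ≤ W := by rw [inf_comm, (hV.iSupIndep i).eq_bot, sup_bot_eq]

theorem finrank_mul_card [Fintype ι] [FiniteDimensional K E] (hV : IsSystemOfImprimitivity Γ V)
    (hΓ : ActsIrreducibly (Set.range (DistribMulAction.toModuleEnd K E : Γ →* Module.End K E)))
    (i : ι) : Fintype.card ι * Module.finrank K (V i) = Module.finrank K E := by
  have hfinrank j : Module.finrank K (V j) = Module.finrank K (V i) := by
    obtain ⟨g, hg⟩ := hV.exists_smul_eq_of_actsIrreducibly hΓ i j
    rw [← hg]
    exact (DistribMulAction.toLinearEquiv K E g).finrank_map_eq (V i)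
  rw [← (LinearEquiv.ofBijective (DirectSum.coeLinearMap V) hV.isInternal).finrank_eq,
    Module.finrank_directSum, Finset.sum_congr rfl fun j _ => hfinrank j, Finset.sum_const,
    Finset.card_univ, smul_eq_mul]

end IsSystemOfImprimitivity

/-- The representation on a subspace of its stabilizer. -/
def stabilizerRep (W : Submodule K E) : Representation K (MulAction.stabilizer Γ W) W :=
  Subrepresentation.toRepresentation (ρ := Representation.ofDistribMulAction K _ E)
    ⟨W, fun g _ hv => g.2.le (Submodule.smul_mem_pointwise_smul _ (g : Γ) W hv)⟩

theorem IsSystemOfImprimitivity.actsIrreducibly_stabilizerRep {V : ι → Submodule K E}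
    (hV : IsSystemOfImprimitivity Γ V)
    (hΓ : ActsIrreducibly (Set.range (DistribMulAction.toModuleEnd K E : Γ →* Module.End K E)))
    (i : ι) : ActsIrreducibly (Set.range (stabilizerRep (Γ := Γ) (V i))) := by
  intro W hW
  have hle : ∀ g ∈ MulAction.stabilizer Γ (V i), g • W.map (V i).subtype ≤ W.map (V i).subtype := by
    rintro g hg _ ⟨_, ⟨w, hw, rfl⟩, rfl⟩
    exact ⟨_, hW _ ⟨⟨g, hg⟩, rfl⟩ hw, rfl⟩
  have hinj := Submodule.map_injective_of_injective (V i).injective_subtype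
  exact (hV.eq_bot_or_eq_of_smul_le hΓ (Submodule.map_subtype_le _ _) hle).imp
    (fun h => hinj (h.trans (Submodule.map_bot _).symm))
    fun h => hinj (h.trans (V i).map_subtype_top.symm)

section TranslateBasis

variable {κ : Type*} [DecidableEq ι] {V : ι → Submodule K E} {i₀ : ι} {γ : ι → Γ}

/-- The basis of `E` obtained from a basis of one summand `V i₀` by translating it to each summand
`V i = γ i • V i₀`. -/
noncomputable def translateBasis (hV : DirectSum.IsInternal V) (b : Module.Basis κ K (V i₀))
    (hγ : ∀ i, γ i • V i₀ = V i) : Module.Basis (ι × κ) K E :=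
  (hV.collectedBasis fun i => b.map <|
    ((DistribMulAction.toLinearEquiv K E (γ i)).submoduleMap (V i₀)).trans
      (LinearEquiv.ofEq _ _ (hγ i))).reindex (Equiv.sigmaEquivProd ι κ)

variable (hV : DirectSum.IsInternal V) (b : Module.Basis κ K (V i₀)) (hγ : ∀ i, γ i • V i₀ = V i)

theorem translateBasis_apply (q : ι × κ) : translateBasis hV b hγ q = γ q.1 • (b q.2 : E) := by
  rw [translateBasis, Module.Basis.reindex_apply, hV.collectedBasis_coe]
  rfl

theorem translateBasis_repr_smul (i : ι) (w : V i₀) (x : κ) :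
    (translateBasis hV b hγ).repr (γ i • (w : E)) (i, x) = b.repr w x := by
  have hmem : γ i • (w : E) ∈ V i := hγ i ▸ Submodule.smul_mem_pointwise_smul _ _ _ w.2
  have hw : (DistribMulAction.toLinearEquiv K E (γ i)).symm (γ i • (w : E)) = w :=
    (DistribMulAction.toLinearEquiv K E (γ i)).symm_apply_apply (w : E)
  rw [translateBasis, Module.Basis.repr_reindex_apply]
  refine (hV.collectedBasis_repr_of_mem _ hmem).trans ?_
  rw [Module.Basis.map_repr, LinearEquiv.trans_apply]
  congr 2
  exact Subtype.ext hw

theorem translateBasis_repr_of_mem_of_ne {i : ι} {v : E} (hv : v ∈ V i) {q : ι × κ}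
    (hq : q.1 ≠ i) : (translateBasis hV b hγ).repr v q = 0 := by
  rw [translateBasis, Module.Basis.repr_reindex_apply]
  exact hV.collectedBasis_repr_of_mem_ne _ hq.symm hv

theorem mem_iff_translateBasis_repr [Finite ι] [Finite κ] (i : ι) (v : E) :
    v ∈ V i ↔ ∀ q : ι × κ, q.1 ≠ i → (translateBasis hV b hγ).repr v q = 0 := by
  refine ⟨fun hv q => translateBasis_repr_of_mem_of_ne hV b hγ hv, fun hv => ?_⟩
  have := Fintype.ofFinite ι
  have := Fintype.ofFinite κ
  rw [← (translateBasis hV b hγ).sum_repr v]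
  refine sum_mem fun q _ => ?_
  obtain rfl | hq := eq_or_ne q.1 i
  · rw [translateBasis_apply, ← hγ]
    exact Submodule.smul_mem _ _ (Submodule.smul_mem_pointwise_smul _ _ _ (b q.2).2)
  · rw [hv q hq, zero_smul]
    exact zero_mem _

variable [Fintype ι] [Fintype κ] [DecidableEq κ]

/-- The `(i, j)` block, in the translated basis, of the action of `g`. -/
noncomputable def translateBlock (g : Γ) (i j : ι) : Matrix κ κ K :=
  (LinearMap.toMatrix (translateBasis hV b hγ) (translateBasis hV b hγ)
    (DistribMulAction.toModuleEnd K E g)).submatrix (Prod.mk i) (Prod.mk j)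

theorem translateBlock_eq_zero {g : Γ} {i j k : ι} (hg : g • V j = V k) (hik : i ≠ k) :
    translateBlock hV b hγ g i j = 0 := by
  ext x y
  rw [translateBlock, Matrix.submatrix_apply, LinearMap.toMatrix_apply, translateBasis_apply]
  refine translateBasis_repr_of_mem_of_ne hV b hγ (i := k) ?_ hik
  rw [← hg, ← hγ j]
  exact Submodule.smul_mem_pointwise_smul _ _ _ (Submodule.smul_mem_pointwise_smul _ _ _ (b y).2)

theorem translateBlock_conj (h : MulAction.stabilizer Γ (V i₀)) (i j : ι) :
    translateBlock hV b hγ (γ i * h * (γ j)⁻¹) i j =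
      LinearMap.toMatrix b b (stabilizerRep _ h) := by
  ext x y
  rw [translateBlock, Matrix.submatrix_apply, LinearMap.toMatrix_apply, translateBasis_apply,
    LinearMap.toMatrix_apply, ← translateBasis_repr_smul hV b hγ i]
  congr 2
  rw [DistribMulAction.toModuleEnd_apply, DistribSMul.toLinearMap_apply, smul_smul,
    inv_mul_cancel_right, mul_smul]
  rfl

theorem setOf_translateBlock_ne_zero [Nonempty κ] (hΓ : IsSystemOfImprimitivity Γ V) (i j : ι) :
    {B | B ≠ 0 ∧ ∃ g : Γ, B = translateBlock hV b hγ g i j} =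
      Set.range fun h : MulAction.stabilizer Γ (V i₀) =>
        LinearMap.toMatrix b b (stabilizerRep _ h) := by
  ext B
  constructor
  · rintro ⟨hB, g, rfl⟩
    obtain ⟨k, hk⟩ := hΓ.exists_smul_eq g j
    obtain rfl : i = k := by
      by_contra hik
      exact hB (translateBlock_eq_zero hV b hγ hk hik)
    have hstab : (γ i)⁻¹ * g * γ j ∈ MulAction.stabilizer Γ (V i₀) := by
      rw [MulAction.mem_stabilizer_iff, mul_smul, mul_smul, hγ, hk, ← hγ, inv_smul_smul]
    refine ⟨⟨_, hstab⟩, ?_⟩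
    dsimp only
    rw [← translateBlock_conj hV b hγ _ i j]
    congr 1
    group
  · rintro ⟨h, rfl⟩
    have hunit : IsUnit (LinearMap.toMatrixAlgEquiv b (stabilizerRep _ h)) :=
      ((Group.isUnit h).map (stabilizerRep _)).map (LinearMap.toMatrixAlgEquiv b)
    exact ⟨hunit.ne_zero, _, (translateBlock_conj hV b hγ h i j).symm⟩

end TranslateBasis

end GroupAction

section Copies

open scoped Kronecker

variable {K A M Q ι κ : Type*} [Field K] [Ring A] [Algebra K A] [AddCommGroup M] [Module K M]
  [Module A M] [IsScalarTower K A M] [AddCommGroup Q] [Module K Q] [Module A Q]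
  [IsScalarTower K A Q] [Fintype ι]

/-- The basis of a module `M` isomorphic to a power `ι → Q` formed by the copies of a basis
of `Q`. -/
noncomputable def copiesBasis (e : M ≃ₗ[A] (ι → Q)) (c : Module.Basis κ K Q) :
    Module.Basis (ι × κ) K M :=
  ((Pi.basis fun _ : ι => c).reindex (Equiv.sigmaEquivProd ι κ)).map (e.restrictScalars K).symm

theorem copiesBasis_repr_apply (e : M ≃ₗ[A] (ι → Q)) (c : Module.Basis κ K Q) (v : M) (q : ι × κ) :
    (copiesBasis e c).repr v q = c.repr (e v q.1) q.2 := by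
  rw [copiesBasis, Module.Basis.map_repr, LinearEquiv.trans_apply, Module.Basis.repr_reindex_apply]
  exact Pi.basis_repr ..

variable [DecidableEq ι]

theorem copiesBasis_apply (e : M ≃ₗ[A] (ι → Q)) (c : Module.Basis κ K Q) (q : ι × κ) :
    copiesBasis e c q = e.symm (Pi.single q.1 (c q.2)) := by
  rw [copiesBasis, Module.Basis.map_apply, Module.Basis.reindex_apply]
  exact congrArg e.symm (Pi.basis_apply _ _)

theorem toMatrix_copiesBasis_lsmul [Fintype κ] [DecidableEq κ] (e : M ≃ₗ[A] (ι → Q))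
    (c : Module.Basis κ K Q) (a : A) :
    LinearMap.toMatrix (copiesBasis e c) (copiesBasis e c) (Algebra.lsmul K K M a) =
      (1 : Matrix ι ι K) ⊗ₖ LinearMap.toMatrix c c (Algebra.lsmul K K Q a) := by
  ext ⟨i, x⟩ ⟨j, y⟩
  rw [LinearMap.toMatrix_apply, Matrix.kroneckerMap_apply, LinearMap.toMatrix_apply,
    copiesBasis_repr_apply, copiesBasis_apply, Algebra.lsmul_coe, Algebra.lsmul_coe, e.map_smul,
    e.apply_symm_apply, Pi.smul_apply]
  obtain rfl | hij := eq_or_ne i j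
  · rw [Pi.single_eq_same, Matrix.one_apply_eq, one_mul]
  · rw [Pi.single_eq_of_ne hij, Matrix.one_apply_ne hij, smul_zero, map_zero, Finsupp.zero_apply,
      zero_mul]

variable {E : Type*} [AddCommGroup E] [Module K E] {S : Set (Module.End K E)}

theorem actsIrreducibly_range_lsmul_adjoin [Module (Algebra.adjoin K S) Q]
    [IsScalarTower K (Algebra.adjoin K S) Q] [IsSimpleModule (Algebra.adjoin K S) Q] :
    ActsIrreducibly (Set.range fun f : S =>
      Algebra.lsmul K K Q (⟨f, Algebra.subset_adjoin f.2⟩ : Algebra.adjoin K S)) := by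
  intro W hW
  have hadjoin : ∀ a : Algebra.adjoin K S, ∀ w ∈ W, a • w ∈ W := fun ⟨a, ha⟩ => by
    induction ha using Algebra.adjoin_induction with
    | mem f hf => exact hW _ ⟨⟨f, hf⟩, rfl⟩
    | algebraMap c =>
      intro w hw
      have := W.smul_mem c hw
      rwa [← algebraMap_smul (Algebra.adjoin K S) c w] at this
    | add f g hf hg ihf ihg =>
      intro w hw
      exact (add_smul (⟨f, hf⟩ : Algebra.adjoin K S) ⟨g, hg⟩ w).symm ▸
        W.add_mem (ihf w hw) (ihg w hw)
    | mul f g hf hg ihf ihg =>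
      intro w hw
      exact (mul_smul (⟨f, hf⟩ : Algebra.adjoin K S) ⟨g, hg⟩ w).symm ▸ ihf _ (ihg w hw)
  let P : Submodule (Algebra.adjoin K S) Q := { W with smul_mem' := fun a w hw => hadjoin a w hw }
  have hP : P.restrictScalars K = W := rfl
  rw [← hP, Submodule.restrictScalars_eq_bot_iff, Submodule.restrictScalars_eq_top_iff]
  exact eq_bot_or_eq_top P

theorem exists_basis_toMatrix_image_eq_kronecker_of_linearEquiv
    [Module (Algebra.adjoin K S) Q] [IsScalarTower K (Algebra.adjoin K S) Q]
    [IsSimpleModule (Algebra.adjoin K S) Q] [Module.Finite K Q]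
    (e : E ≃ₗ[Algebra.adjoin K S] (ι → Q)) :
    ∃ (s : ℕ) (b : Module.Basis (ι × Fin s) K E) (F : Set (Matrix (Fin s) (Fin s) K)),
      ActsIrreducibly (Matrix.toLin' '' F) ∧
        LinearMap.toMatrix b b '' S = (fun B => (1 : Matrix ι ι K) ⊗ₖ B) '' F := by
  let c := Module.finBasis K Q
  refine ⟨_, copiesBasis e c, LinearMap.toMatrix c c '' Set.range fun f : S =>
      Algebra.lsmul K K Q (⟨f, Algebra.subset_adjoin f.2⟩ : Algebra.adjoin K S),
    (actsIrreducibly_image_toLin'_toMatrix_iff c _).2 actsIrreducibly_range_lsmul_adjoin, ?_⟩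
  have hlsmul (f : S) : (f : Module.End K E) =
      Algebra.lsmul K K E (⟨f, Algebra.subset_adjoin f.2⟩ : Algebra.adjoin K S) := rfl
  rw [← Set.range_comp, ← Set.range_comp, Set.image_eq_range]
  refine congrArg Set.range (funext fun f => ?_)
  rw [hlsmul f, toMatrix_copiesBasis_lsmul]
  rfl

theorem IsIsotypicSubspace.exists_basis_toMatrix_image_eq_kronecker [FiniteDimensional K E]
    [Nontrivial E] [IsSemisimpleModule (Algebra.adjoin K S) E]
    (hS : IsIsotypicSubspace (Algebra.adjoin K S) (⊤ : Submodule K E)) :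
    ∃ (m s : ℕ) (b : Module.Basis (Fin m × Fin s) K E) (F : Set (Matrix (Fin s) (Fin s) K)),
      ActsIrreducibly (Matrix.toLin' '' F) ∧
        LinearMap.toMatrix b b '' S = (fun B => (1 : Matrix (Fin m) (Fin m) K) ⊗ₖ B) '' F := by
  obtain ⟨P, hP, hPtop⟩ := hS
  obtain rfl : P = ⊤ := (Submodule.restrictScalars_eq_top_iff K _ E).1 hPtop
  have : Module.Finite (Algebra.adjoin K S) E := Module.Finite.of_restrictScalars_finite K _ E
  obtain ⟨m, -, Q, hQ, ⟨e⟩⟩ := (Submodule.topEquiv.isIsotypic_iff.1 hP).linearEquiv_fun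
  have : Module.Finite K Q := inferInstanceAs (Module.Finite K (Q.restrictScalars K))
  exact ⟨m, exists_basis_toMatrix_image_eq_kronecker_of_linearEquiv (Q := Q) e⟩

end Copies

section Matrices

theorem isMatGroup_range {Γ : Type*} [Group Γ] {d : ℕ} (f : Γ →* Mat d) :
    IsMatGroup (Set.range f) := by
  refine ⟨⟨1, map_one f⟩, ?_, ?_⟩
  · rintro _ ⟨g, rfl⟩ _ ⟨h, rfl⟩
    exact ⟨g * h, map_mul f g h⟩
  · rintro _ ⟨g, rfl⟩
    have hinv : f g * f g⁻¹ = 1 := by rw [← map_mul, mul_inv_cancel, map_one]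
    exact ⟨(Group.isUnit g).map f, g⁻¹, (Matrix.inv_eq_right_inv hinv).symm⟩

variable {n : ℕ}

theorem toMatrix'_units_inv (u : (Module.End ℂ (Fin n → ℂ))ˣ) :
    LinearMap.toMatrix' (↑u⁻¹ : Module.End ℂ (Fin n → ℂ)) =
      (LinearMap.toMatrix' (u : Module.End ℂ (Fin n → ℂ)))⁻¹ := by
  refine (Matrix.inv_eq_right_inv ?_).symm
  rw [← LinearMap.toMatrix'_mul, u.mul_inv, LinearMap.toMatrix'_one]

/-- A group of matrices, as a group of invertible endomorphisms of `ℂ^n`. -/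
def IsMatGroup.toSubgroup {G : Set (Mat n)} (hG : IsMatGroup G) :
    Subgroup (Module.End ℂ (Fin n → ℂ))ˣ where
  carrier := {u | LinearMap.toMatrix' (u : Module.End ℂ (Fin n → ℂ)) ∈ G}
  one_mem' := by simpa using hG.1
  mul_mem' hu hv := by simpa [LinearMap.toMatrix'_mul] using hG.2.1 _ hu _ hv
  inv_mem' {u} hu := by
    rw [Set.mem_ofPred_eq, toMatrix'_units_inv]
    exact (hG.2.2 _ hu).2

theorem IsMatGroup.range_toModuleEnd {G : Set (Mat n)} (hG : IsMatGroup G) :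
    Set.range (DistribMulAction.toModuleEnd ℂ (Fin n → ℂ) : hG.toSubgroup →* _) =
      Matrix.toLin' '' G := by
  ext f
  constructor
  · rintro ⟨g, rfl⟩
    exact ⟨_, g.2, Matrix.toLin'_toMatrix' _⟩
  · rintro ⟨A, hA, rfl⟩
    obtain ⟨u, hu⟩ := (hG.2.2 A hA).1.map (Matrix.toLinAlgEquiv' (R := ℂ) (n := Fin n))
    have hu' : (u : Module.End ℂ (Fin n → ℂ)) = Matrix.toLin' A := hu
    refine ⟨⟨u, ?_⟩, hu'⟩
    change LinearMap.toMatrix' (u : Module.End ℂ (Fin n → ℂ)) ∈ G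
    rwa [hu', LinearMap.toMatrix'_toLin']

theorem IsMatGroup.exists_mem_iff {G : Set (Mat n)} (hG : IsMatGroup G)
    {p : Module.End ℂ (Fin n → ℂ) → Prop} :
    (∃ A ∈ G, p (Matrix.toLin' A)) ↔
      ∃ g : hG.toSubgroup, p (DistribMulAction.toModuleEnd ℂ (Fin n → ℂ) g) := by
  rw [← Set.exists_range_iff, hG.range_toModuleEnd, Set.exists_mem_image]

variable {S : Set (Mat n)}

theorem invariantUnder_iff {W : Submodule ℂ (Fin n → ℂ)} :
    InvariantUnder S W ↔
      ∀ f : Module.End ℂ (Fin n → ℂ), f ∈ Matrix.toLin' '' S → W ∈ f.invtSubmodule := by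
  rw [Set.forall_mem_image]
  rfl

theorem irreducibleSet_iff : IrreducibleSet S ↔ ActsIrreducibly (Matrix.toLin' '' S) :=
  forall_congr' fun _ => imp_congr_left invariantUnder_iff

theorem isIrredSubrep_iff {U : Submodule ℂ (Fin n → ℂ)} :
    IsIrredSubrep S U ↔ IsSimpleSubspace (Algebra.adjoin ℂ (Matrix.toLin' '' S)) U := by
  simp only [IsIrredSubrep, invariantUnder_iff, isSimpleSubspace_adjoin_iff]

theorem repIso_iff {U U' : Submodule ℂ (Fin n → ℂ)} :
    RepIso S U U' ↔ ∃ f, IsIntertwiningOn (Matrix.toLin' '' S) U U' f := by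
  simp only [IsIntertwiningOn, Set.forall_mem_image]
  rfl

theorem isotypicUnder_iff {W : Submodule ℂ (Fin n → ℂ)} :
    IsotypicUnder S W ↔ IsIsotypicSubspace (Algebra.adjoin ℂ (Matrix.toLin' '' S)) W := by
  simp only [IsotypicUnder, invariantUnder_iff, isIrredSubrep_iff, repIso_iff,
    isIsotypicSubspace_adjoin_iff]

theorem setOf_maximal_isotypicUnder :
    {W | IsotypicUnder S W ∧ ∀ W', IsotypicUnder S W' → W ≤ W' → W = W'} =
      {W | Maximal (IsIsotypicSubspace (Algebra.adjoin ℂ (Matrix.toLin' '' S))) W} := by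
  ext W
  simp only [isotypicUnder_iff, maximal_iff, Set.mem_ofPred_eq]

end Matrices

section Similarity

open scoped Kronecker

variable {n : ℕ}

theorem exists_isUnit_conj_eq_toMatrix (b : Module.Basis (Fin n) ℂ (Fin n → ℂ)) :
    ∃ T : Mat n, IsUnit T ∧ ∀ A, T⁻¹ * A * T = LinearMap.toMatrix b b (Matrix.toLin' A) := by
  have hinv : (Pi.basisFun ℂ (Fin n)).toMatrix b * b.toMatrix (Pi.basisFun ℂ (Fin n)) = 1 :=
    (Pi.basisFun ℂ (Fin n)).toMatrix_mul_toMatrix_flip b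
  have hA (A : Mat n) : LinearMap.toMatrix (Pi.basisFun ℂ (Fin n)) (Pi.basisFun ℂ (Fin n))
      (Matrix.toLin' A) = A := LinearMap.toMatrix'_toLin' A
  refine ⟨_, IsUnit.of_mul_eq_one _ hinv, fun A => ?_⟩
  rw [Matrix.inv_eq_right_inv hinv, ← basis_toMatrix_mul_linearMap_toMatrix_mul_basis_toMatrix b
    (Pi.basisFun ℂ (Fin n)) b (Pi.basisFun ℂ (Fin n)), hA]

theorem exists_conj_image_eq_kron_of_basis {m s : ℕ} {S : Set (Mat n)}
    (b : Module.Basis (Fin m × Fin s) ℂ (Fin n → ℂ)) {F : Set (Mat s)}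
    (hF : LinearMap.toMatrix b b '' (Matrix.toLin' '' S) =
      (fun B => (1 : Mat m) ⊗ₖ B) '' F) :
    ∃ (h : m * s = n) (T : Mat n), IsUnit T ∧
      (fun A => T⁻¹ * A * T) '' S =
        (fun B => Matrix.reindex (finCongr h) (finCongr h) (kron (1 : Mat m) B)) '' F := by
  have h : m * s = n := by
    simpa using (Module.finrank_eq_card_basis b).symm
  let τ : Fin m × Fin s ≃ Fin n := finProdFinEquiv.trans (finCongr h)
  obtain ⟨T, hT, hconj⟩ := exists_isUnit_conj_eq_toMatrix (b.reindex τ)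
  have hreindex (f : Module.End ℂ (Fin n → ℂ)) :
      LinearMap.toMatrix (b.reindex τ) (b.reindex τ) f =
        Matrix.reindex τ τ (LinearMap.toMatrix b b f) := by
    ext i j
    simp [LinearMap.toMatrix_apply]
  have := congrArg (Matrix.reindex τ τ '' ·) hF
  simp_rw [Set.image_image] at this
  refine ⟨h, T, hT, ?_⟩
  simp_rw [hconj, hreindex]
  exact this

end Similarity

section Clifford

variable {n r : ℕ} {G N : Set (Mat n)}

theorem IsMatGroup.map_conjAlgEquiv_adjoin (hG : IsMatGroup G)
    (hN : ∀ g ∈ G, ∀ A ∈ N, g⁻¹ * A * g ∈ N) (g : hG.toSubgroup) :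
    (Algebra.adjoin ℂ (Matrix.toLin' '' N)).map
        ((DistribMulAction.toLinearEquiv ℂ (Fin n → ℂ) g).conjAlgEquiv ℂ).toAlgHom =
      Algebra.adjoin ℂ (Matrix.toLin' '' N) := by
  refine _root_.map_conjAlgEquiv_adjoin (fun g => ?_) g
  rintro _ ⟨A, hA, rfl⟩
  refine ⟨_, hN _ g⁻¹.2 A hA, ?_⟩
  rw [← toMatrix'_units_inv, Matrix.toLin'_mul, Matrix.toLin'_mul, Matrix.toLin'_toMatrix',
    Matrix.toLin'_toMatrix', ← Subgroup.coe_inv, inv_inv]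
  rfl

theorem IsIsotypicSubspace.exists_conj_image_eq_kron [NeZero n]
    [IsSemisimpleModule (Algebra.adjoin ℂ (Matrix.toLin' '' N)) (Fin n → ℂ)]
    (hN : IsIsotypicSubspace (Algebra.adjoin ℂ (Matrix.toLin' '' N)) ⊤) :
    ∃ (m s : ℕ) (h : m * s = n) (N0 : Set (Mat s)) (T : Mat n),
      IrreducibleSet N0 ∧ IsUnit T ∧
      (fun A => T⁻¹ * A * T) '' N =
        (fun B => Matrix.reindex (finCongr h) (finCongr h) (kron (1 : Mat m) B)) '' N0 := by
  obtain ⟨m, s, b, F, hF, hkron⟩ := hN.exists_basis_toMatrix_image_eq_kronecker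
  obtain ⟨h, T, hT, hTkron⟩ := exists_conj_image_eq_kron_of_basis b hkron
  exact ⟨m, s, h, F, T, irreducibleSet_iff.2 hF, hT, hTkron⟩

theorem IsSystemOfImprimitivity.exists_linearEquiv_blocks_eq
    (hG : IsMatGroup G) (hGirr : IrreducibleSet G) {V : Fin r → Submodule ℂ (Fin n → ℂ)}
    (hV : IsSystemOfImprimitivity hG.toSubgroup V) (i₀ : Fin r) {d : ℕ}
    (hd : Module.finrank ℂ (V i₀) = d) :
    ∃ (φ : (Fin n → ℂ) ≃ₗ[ℂ] (Fin r × Fin d → ℂ)) (H : Set (Mat d)),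
      (∀ i, ∀ v : Fin n → ℂ, v ∈ V i ↔ ∀ q : Fin r × Fin d, q.1 ≠ i → φ v q = 0) ∧
      IsMatGroup H ∧ IrreducibleSet H ∧
      ∀ i j : Fin r,
        {B : Mat d | B ≠ 0 ∧ ∃ A ∈ G,
          B = Matrix.of fun x y =>
            LinearMap.toMatrix'
              ((φ.toLinearMap ∘ₗ Matrix.mulVecLin A) ∘ₗ φ.symm.toLinearMap)
              (i, x) (j, y)} = H := by
  have hΓ := irreducibleSet_iff.1 hGirr
  rw [← hG.range_toModuleEnd] at hΓ
  have : Nontrivial (V i₀) := Submodule.nontrivial_iff_ne_bot.2 (hV.ne_bot i₀)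
  have : NeZero d := ⟨hd ▸ Module.finrank_pos.ne'⟩
  choose γ hγ using hV.exists_smul_eq_of_actsIrreducibly hΓ i₀
  let b : Module.Basis (Fin d) ℂ (V i₀) := Module.finBasisOfFinrankEq ℂ _ hd
  refine ⟨(translateBasis hV.isInternal b hγ).equivFun,
    Set.range ((LinearMap.toMatrixAlgEquiv b : _ →* Mat d).comp
      (stabilizerRep (Γ := hG.toSubgroup) (V i₀))),
    mem_iff_translateBasis_repr hV.isInternal b hγ, isMatGroup_range _, ?_, fun i j => ?_⟩
  · have := hV.actsIrreducibly_stabilizerRep hΓ i₀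
    rw [← actsIrreducibly_image_toLin'_toMatrix_iff b, ← irreducibleSet_iff,
      ← Set.range_comp] at this
    exact this
  · refine (Set.ext fun B => ?_).trans (setOf_translateBlock_ne_zero hV.isInternal b hγ hV i j)
    exact and_congr_right' (hG.exists_mem_iff (p := fun f => B = Matrix.of fun x y =>
      LinearMap.toMatrix' ((_ ∘ₗ f) ∘ₗ _) (i, x) (j, y)))

end Clifford

theorem stmt6_general {n r : ℕ} (G N : Set (Mat n))
    (hGgrp : IsMatGroup G) (hGirr : IrreducibleSet G)
    (hNnormal : ∀ g ∈ G, ∀ A ∈ N, g⁻¹ * A * g ∈ N)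
    (hns : ¬ ∃ (m s : ℕ) (h : m * s = n) (N0 : Set (Mat s)) (T : Mat n),
      IrreducibleSet N0 ∧ IsUnit T ∧
      (fun A => T⁻¹ * A * T) '' N =
        (fun B => Matrix.reindex (finCongr h) (finCongr h) (kron (1 : Mat m) B)) '' N0)
    (V : Fin r → Submodule ℂ (Fin n → ℂ)) (hVinj : Function.Injective V)
    (hVmax : Set.range V =
      {W | IsotypicUnder N W ∧ ∀ W', IsotypicUnder N W' → W ≤ W' → W = W'}) :
    1 < r ∧ (∀ i, Module.finrank ℂ (V i) = n / r) ∧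
    DirectSum.IsInternal V ∧
    (∀ A ∈ G, ∀ i, ∃ j, ∀ v ∈ V i, A.mulVec v ∈ V j) ∧
    ∃ (φ : (Fin n → ℂ) ≃ₗ[ℂ] (Fin r × Fin (n / r) → ℂ))
      (H : Set (Matrix (Fin (n / r)) (Fin (n / r)) ℂ)),
      (∀ i, ∀ v : Fin n → ℂ,
        v ∈ V i ↔ ∀ q : Fin r × Fin (n / r), q.1 ≠ i → φ v q = 0) ∧
      IsMatGroup H ∧ IrreducibleSet H ∧
      ∀ i j : Fin r,
        {B : Matrix (Fin (n / r)) (Fin (n / r)) ℂ | B ≠ 0 ∧ ∃ A ∈ G,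
          B = Matrix.of fun x y =>
            LinearMap.toMatrix'
              ((φ.toLinearMap ∘ₗ Matrix.mulVecLin A) ∘ₗ φ.symm.toLinearMap)
              (i, x) (j, y)} = H := by
  have hΓ := irreducibleSet_iff.1 hGirr
  rw [← hGgrp.range_toModuleEnd] at hΓ
  have hadjoin := hGgrp.map_conjAlgEquiv_adjoin hNnormal
  have : NeZero n := ⟨by
    rintro rfl
    exact hns ⟨0, 0, rfl, N, 1, fun _ _ => .inl (Subsingleton.elim _ _), isUnit_one,
      congrArg (· '' N) (Subsingleton.elim _ _)⟩⟩
  have hss := isSemisimpleModule_of_actsIrreducibly hΓ hadjoin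
  rw [setOf_maximal_isotypicUnder] at hVmax
  have hV := isSystemOfImprimitivity_of_maximal_isIsotypicSubspace hadjoin hVinj hVmax
  have hr : 1 < r := by
    by_contra hr
    have : Subsingleton (Fin r) := Fin.subsingleton_iff_le_one.2 (not_lt.1 hr)
    obtain ⟨i, hi⟩ := hV.exists_eq_top
    exact hns (hVmax.le ⟨i, hi⟩).prop.exists_conj_image_eq_kron
  have hdim (i : Fin r) : Module.finrank ℂ (V i) = n / r := by
    have := hV.finrank_mul_card hΓ i
    rw [Fintype.card_fin, Module.finrank_fin_fun] at this
    exact (Nat.div_eq_of_eq_mul_right (by omega) this.symm).symm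
  refine ⟨hr, hdim, hV.isInternal, fun A hA i => ?_,
    hV.exists_linearEquiv_blocks_eq hGgrp hGirr ⟨0, by omega⟩ (hdim _)⟩
  obtain ⟨g, hg⟩ := hGgrp.range_toModuleEnd.ge ⟨A, hA, rfl⟩
  obtain ⟨j, hj⟩ := hV.exists_smul_eq g i
  exact ⟨j, fun v hv => hj.le ⟨v, hv, LinearMap.congr_fun hg v⟩⟩

/-- Clifford's theorem, block-monomial form. -/
theorem stmt6 {n r : ℕ} (G N : Set (Mat n))
    (hGgrp : IsMatGroup G) (hGirr : IrreducibleSet G)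
    (hNgrp : IsMatGroup N) (hNsub : N ⊆ G)
    (hNnormal : ∀ g ∈ G, ∀ A ∈ N, g⁻¹ * A * g ∈ N)
    (hNred : ∃ W : Submodule ℂ (Fin n → ℂ), InvariantUnder N W ∧ W ≠ ⊥ ∧ W ≠ ⊤)
    (hns : ¬ ∃ (m s : ℕ) (h : m * s = n) (N0 : Set (Mat s)) (T : Mat n),
      IrreducibleSet N0 ∧ IsUnit T ∧
      (fun A => T⁻¹ * A * T) '' N =
        (fun B => Matrix.reindex (finCongr h) (finCongr h) (kron (1 : Mat m) B)) '' N0)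
    (V : Fin r → Submodule ℂ (Fin n → ℂ)) (hVinj : Function.Injective V)
    (hVmax : Set.range V =
      {W | IsotypicUnder N W ∧ ∀ W', IsotypicUnder N W' → W ≤ W' → W = W'}) :
    1 < r ∧ (∀ i, Module.finrank ℂ (V i) = n / r) ∧
    DirectSum.IsInternal V ∧
    (∀ A ∈ G, ∀ i, ∃ j, ∀ v ∈ V i, A.mulVec v ∈ V j) ∧
    ∃ (φ : (Fin n → ℂ) ≃ₗ[ℂ] (Fin r × Fin (n / r) → ℂ))
      (H : Set (Matrix (Fin (n / r)) (Fin (n / r)) ℂ)),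
      (∀ i, ∀ v : Fin n → ℂ,
        v ∈ V i ↔ ∀ q : Fin r × Fin (n / r), q.1 ≠ i → φ v q = 0) ∧
      IsMatGroup H ∧ IrreducibleSet H ∧
      ∀ i j : Fin r,
        {B : Matrix (Fin (n / r)) (Fin (n / r)) ℂ | B ≠ 0 ∧ ∃ A ∈ G,
          B = Matrix.of fun x y =>
            LinearMap.toMatrix'
              ((φ.toLinearMap ∘ₗ Matrix.mulVecLin A) ∘ₗ φ.symm.toLinearMap)
              (i, x) (j, y)} = H :=
  stmt6_general G N hGgrp hGirr hNnormal hns V hVinj hVmax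
end

section
/- Let n > 1 be odd, let K ⊆ M_n(ℂ) be an indecomposable abelian permutation matrix group, let G_1, …, G_k be generators of all the subgroups of K of prime order, and let J ∈ D_n(±1). Then J ∈ J_K^+ if and only if avg_{G_i}(J) = I for all i = 1, …, k. -/
open Matrix BigOperators
open scoped Classical

/-!
Write `J = diag(d)`. An element `G` of prime order in `K` is a power of some `G_i` with exponent
coprime to the order, so `avg_G(J)` has the same factors as `avg_{G_i}(J)`, permuted. For general
`G ≠ I` of order `p * r`, with `p` prime, the average splits into `r` averages over the element
`G ^ r` of order `p`. What remains is `det J = ∏ x, d x = 1`. If some `G ∈ K` has odd prime order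
`p`, multiplying its averages over all points gives `(det J) ^ p = 1`, and `det J = ±1`. Otherwise
`K` is a nontrivial `2`-group and has a central involution, which by transitivity fixes no point;
its average pairs off the entries of `J` into products equal to `1`.
-/

open Equiv (Perm)

theorem coprime_of_prime_orderOf_pow {M : Type*} [Monoid M] {a : M} {t : ℕ}
    (ha : (orderOf a).Prime) (hat : (orderOf (a ^ t)).Prime) : (orderOf a).Coprime t := by
  refine (ha.coprime_iff_not_dvd).2 fun hdvd => hat.ne_one ?_
  rw [orderOf_dvd_iff_pow_eq_one.1 hdvd, orderOf_one]

section OrbitAvg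

variable {G α M : Type*} [Group G] [MulAction G α] [CommMonoid M]

/-- The average `d(x) · d(g • x) ⋯ d(g ^ (m - 1) • x)`, with `m = orderOf g`: the `x`-th diagonal
entry of `avg_g(diag(d))`. If `g` has infinite order then `m = 0` and the product is empty. -/
noncomputable def orbitAvg (g : G) (d : α → M) (x : α) : M :=
  ∏ k ∈ Finset.range (orderOf g), d (g ^ k • x)

theorem orbitAvg_coe {H : Subgroup G} (g : H) (d : α → M) : orbitAvg (g : G) d = orbitAvg g d := by
  funext x
  rw [orbitAvg, orbitAvg, Subgroup.orderOf_coe]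
  rfl

theorem orbitAvg_pow_of_coprime {g : G} {t : ℕ} (ht : (orderOf g).Coprime t) (d : α → M) :
    orbitAvg (g ^ t) d = orbitAvg g d := by
  funext x
  have mapsTo : ∀ k ∈ Finset.range (orderOf g), t * k % orderOf g ∈ Finset.range (orderOf g) :=
    fun k hk => Finset.mem_range.2 (Nat.mod_lt _ (Nat.zero_lt_of_lt (Finset.mem_range.1 hk)))
  have injOn : Set.InjOn (fun k => t * k % orderOf g) (Finset.range (orderOf g)) := by
    intro a ha b hb hab
    have hmod : a ≡ b [MOD orderOf g] := Nat.ModEq.cancel_left_of_coprime ht hab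
    exact hmod.eq_of_lt_of_lt (Finset.mem_range.1 ha) (Finset.mem_range.1 hb)
  rw [orbitAvg, orbitAvg, ht.orderOf_pow]
  refine Finset.prod_nbij (fun k => t * k % orderOf g) mapsTo injOn
    (Finset.surjOn_of_injOn_of_card_le _ mapsTo injOn le_rfl) fun k _ => ?_
  rw [pow_mod_orderOf, pow_mul]

theorem prod_range_mul_eq_prod_prod (f : ℕ → M) (m r : ℕ) :
    ∏ k ∈ Finset.range (m * r), f k =
      ∏ a ∈ Finset.range m, ∏ b ∈ Finset.range r, f (a * r + b) := by
  induction m with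
  | zero => simp
  | succ m ih => rw [Nat.succ_mul, Finset.prod_range_add, ih, Finset.prod_range_succ]

theorem orbitAvg_eq_prod_orbitAvg_pow {g : G} {r : ℕ} (hr₀ : r ≠ 0) (hr : r ∣ orderOf g)
    (d : α → M) (x : α) :
    orbitAvg g d x = ∏ b ∈ Finset.range r, orbitAvg (g ^ r) d (g ^ b • x) := by
  have horder : orderOf g = orderOf (g ^ r) * r := by
    rw [orderOf_pow_of_dvd hr₀ hr, Nat.div_mul_cancel hr]
  simp only [orbitAvg]
  rw [horder, prod_range_mul_eq_prod_prod, Finset.prod_comm]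
  simp only [smul_smul, ← pow_mul, ← pow_add, mul_comm r]

theorem orbitAvg_eq_one_of_forall_prime {g : G} (hfin : IsOfFinOrder g) (hg : g ≠ 1) {d : α → M}
    (h : ∀ r, (orderOf (g ^ r)).Prime → orbitAvg (g ^ r) d = 1) : orbitAvg g d = 1 := by
  obtain ⟨p, hp, r, hr⟩ := Nat.exists_prime_and_dvd (mt orderOf_eq_one_iff.1 hg)
  have hr₀ : r ≠ 0 := by
    rintro rfl
    exact hfin.orderOf_pos.ne' hr
  have hrdvd : r ∣ orderOf g := hr ▸ dvd_mul_left r p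
  have hgr : orderOf (g ^ r) = p := by
    rw [orderOf_pow_of_dvd hr₀ hrdvd, hr, Nat.mul_div_cancel p (Nat.pos_of_ne_zero hr₀)]
  funext x
  rw [orbitAvg_eq_prod_orbitAvg_pow hr₀ hrdvd, h r (hgr ▸ hp)]
  exact Finset.prod_const_one

end OrbitAvg

section Center

variable {G : Type*} [Group G]

theorem exists_mem_center_orderOf_eq_of_isPGroup [Finite G] [Nontrivial G] {p : ℕ}
    [Fact p.Prime] (hG : IsPGroup p G) : ∃ g ∈ Subgroup.center G, orderOf g = p := by
  have : Nontrivial (Subgroup.center G) := hG.center_nontrivial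
  obtain ⟨k, hk, hcard⟩ := (hG.to_subgroup (Subgroup.center G)).nontrivial_iff_card.1 this
  obtain ⟨g, hg⟩ := exists_prime_orderOf_dvd_card' (G := Subgroup.center G) p
    (hcard ▸ dvd_pow_self p hk.ne')
  exact ⟨g, g.2, (Subgroup.orderOf_coe g).trans hg⟩

theorem smul_ne_self_of_mem_center {α : Type*} [MulAction G α] [FaithfulSMul G α]
    [MulAction.IsPretransitive G α] {g : G} (hg : g ∈ Subgroup.center G) (hg₁ : g ≠ 1) (x : α) :
    g • x ≠ x := by
  intro hx
  refine hg₁ (eq_of_smul_eq_smul fun y : α => ?_)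
  obtain ⟨h, rfl⟩ := MulAction.exists_smul_eq G x y
  rw [one_smul, smul_smul, ← Subgroup.mem_center_iff.1 hg h, mul_smul, hx]

end Center

section Prod

variable {G α M : Type*} [Group G] [MulAction G α] [Fintype α] [CommMonoid M]

theorem prod_orbitAvg (g : G) (d : α → M) : ∏ x, orbitAvg g d x = (∏ x, d x) ^ orderOf g := by
  calc ∏ x, orbitAvg g d x
      = ∏ k ∈ Finset.range (orderOf g), ∏ x, d (MulAction.toPerm (g ^ k) x) := Finset.prod_comm
    _ = ∏ _k ∈ Finset.range (orderOf g), ∏ x, d x :=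
      Finset.prod_congr rfl fun k _ => Equiv.prod_comp (MulAction.toPerm (g ^ k)) d
    _ = (∏ x, d x) ^ orderOf g := by rw [Finset.prod_const, Finset.card_range]

theorem prod_eq_one_of_orbitAvg_eq_one_of_odd {g : G} (hg : Odd (orderOf g)) {d : α → M}
    (hd : ∀ x, d x ^ 2 = 1) (h : orbitAvg g d = 1) : ∏ x, d x = 1 := by
  have hodd : (∏ x, d x) ^ orderOf g = 1 := by
    rw [← prod_orbitAvg, h]
    exact Finset.prod_const_one
  have hsq : (∏ x, d x) ^ 2 = 1 := by
    rw [← Finset.prod_pow]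
    exact Finset.prod_eq_one fun x _ => hd x
  rw [← orderOf_eq_one_iff, ← Nat.dvd_one, ← hg.coprime_two_right.gcd_eq_one]
  exact Nat.dvd_gcd (orderOf_dvd_of_pow_eq_one hodd) (orderOf_dvd_of_pow_eq_one hsq)

theorem prod_eq_one_of_orbitAvg_eq_one_of_involution {g : G} (hg : orderOf g = 2)
    (hfix : ∀ x : α, g • x ≠ x) {d : α → M} (h : orbitAvg g d = 1) : ∏ x, d x = 1 := by
  refine Finset.prod_involution (fun x _ => g • x) (fun x _ => ?_) (fun x _ _ => hfix x)
    (fun x _ => Finset.mem_univ _) fun x _ => ?_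
  · have hx := congrFun h x
    rwa [orbitAvg, hg, Finset.prod_range_succ, Finset.prod_range_one, pow_zero, one_smul,
      pow_one] at hx
  · rw [smul_smul, ← sq, ← hg, pow_orderOf_eq_one, one_smul]

theorem prod_eq_one_of_forall_orbitAvg_eq_one [Finite G] [Nontrivial α] [FaithfulSMul G α]
    [MulAction.IsPretransitive G α] {d : α → M} (hd : ∀ x, d x ^ 2 = 1)
    (h : ∀ g : G, (orderOf g).Prime → orbitAvg g d = 1) : ∏ x, d x = 1 := by
  rcases (Nat.card G).eq_two_pow_or_exists_odd_prime_and_dvd with ⟨k, hk⟩ | ⟨p, hp, hpG, hodd⟩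
  · have : Nontrivial G := by
      obtain ⟨x, y, hxy⟩ := exists_pair_ne α
      obtain ⟨g, rfl⟩ := MulAction.exists_smul_eq G x y
      exact ⟨g, 1, fun hg => hxy (by rw [hg, one_smul])⟩
    obtain ⟨g, hcenter, hg⟩ := exists_mem_center_orderOf_eq_of_isPGroup (IsPGroup.of_card hk)
    have hg₁ : g ≠ 1 := by
      rintro rfl
      simp at hg
    exact prod_eq_one_of_orbitAvg_eq_one_of_involution hg (smul_ne_self_of_mem_center hcenter hg₁)
      (h g (hg ▸ Nat.prime_two))
  · have := Fact.mk hp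
    obtain ⟨g, rfl⟩ := exists_prime_orderOf_dvd_card' p hpG
    exact prod_eq_one_of_orbitAvg_eq_one_of_odd hodd hd (h g hp)

end Prod

section PermMat

variable {n : ℕ}

theorem permMat_eq_permMatrixHom (σ : Perm (Fin n)) : permMat σ = permMatrixHom σ := by
  ext i j
  simp [permMat, PEquiv.toMatrix_apply, Equiv.symm_apply_eq]

theorem permMat_one : permMat (1 : Perm (Fin n)) = 1 := by
  rw [permMat_eq_permMatrixHom, map_one]

theorem permMat_mul (σ τ : Perm (Fin n)) : permMat (σ * τ) = permMat σ * permMat τ := by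
  simp only [permMat_eq_permMatrixHom, map_mul]

theorem permMat_pow (σ : Perm (Fin n)) (k : ℕ) : permMat (σ ^ k) = permMat σ ^ k := by
  simp only [permMat_eq_permMatrixHom, map_pow]

theorem permMat_inv (σ : Perm (Fin n)) : permMat σ⁻¹ = (permMat σ)⁻¹ :=
  (Matrix.inv_eq_left_inv (by rw [← permMat_mul, inv_mul_cancel, permMat_one])).symm

theorem permMat_apply_ne_zero_iff {σ : Perm (Fin n)} {i j : Fin n} :
    permMat σ i j ≠ 0 ↔ σ j = i := by
  simp [permMat, eq_comm]

theorem permMat_injective : Function.Injective (permMat (n := n)) := by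
  intro σ τ h
  ext j : 1
  rw [← permMat_apply_ne_zero_iff, h, permMat_apply_ne_zero_iff]

theorem orderOf_permMat (σ : Perm (Fin n)) : orderOf (permMat σ) = orderOf σ := by
  have hinj : Function.Injective (permMatrixHom : Perm (Fin n) →* Mat n) := by
    simpa only [← funext permMat_eq_permMatrixHom] using permMat_injective
  rw [permMat_eq_permMatrixHom, orderOf_injective _ hinj]

theorem permMat_inv_mul_diagonal_mul (σ : Perm (Fin n)) (d : Fin n → ℂ) :
    (permMat σ)⁻¹ * diagonal d * permMat σ = diagonal (d ∘ σ) := by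
  rw [← permMat_inv, permMat_eq_permMatrixHom, permMat_eq_permMatrixHom, permMatrixHom_apply,
    permMatrixHom_apply, inv_inv, PEquiv.toMatrix_toPEquiv_mul, PEquiv.mul_toMatrix_toPEquiv,
    submatrix_submatrix]
  exact submatrix_diagonal_equiv d σ

theorem list_prod_map_diagonal {ι m R : Type*} [Fintype m] [DecidableEq m] [Semiring R]
    (l : List ι) (f : ι → m → R) :
    (l.map fun k => diagonal (f k)).prod = diagonal (l.map f).prod := by
  simpa [Function.comp_def] using (map_list_prod (diagonalRingHom m R) (l.map f)).symm

theorem avgMat_permMat (σ : Perm (Fin n)) (d : Fin n → ℂ) :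
    avgMat (permMat σ) (diagonal d) = diagonal (orbitAvg σ d) := by
  have hconj (k : ℕ) :
      (permMat σ ^ k)⁻¹ * diagonal d * permMat σ ^ k = diagonal (d ∘ ⇑(σ ^ k)) := by
    rw [← permMat_pow, permMat_inv_mul_diagonal_mul]
  have hprod : ((List.range (orderOf σ)).map fun k => d ∘ ⇑(σ ^ k)).prod = orbitAvg σ d := by
    funext x
    exact Finset.prod_apply x (Finset.range (orderOf σ)) fun k => d ∘ ⇑(σ ^ k)
  simp only [avgMat, hconj]
  rw [orderOf_permMat, list_prod_map_diagonal, hprod]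

theorem avgMat_permMat_eq_one_iff {σ : Perm (Fin n)} {d : Fin n → ℂ} :
    avgMat (permMat σ) (diagonal d) = 1 ↔ orbitAvg σ d = 1 := by
  rw [avgMat_permMat, diagonal_eq_one]

theorem avgMat_pow_of_coprime {A : Mat n} (hA : IsPermMat A) {t : ℕ} (ht : (orderOf A).Coprime t)
    (d : Fin n → ℂ) : avgMat (A ^ t) (diagonal d) = avgMat A (diagonal d) := by
  obtain ⟨σ, rfl⟩ := hA
  rw [orderOf_permMat] at ht
  rw [← permMat_pow, avgMat_permMat, avgMat_permMat, orbitAvg_pow_of_coprime ht]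

end PermMat

section MatGroup

variable {n : ℕ} {K : Set (Mat n)}

/-- The group of permutations whose matrices lie in the matrix group `K`; a permutation matrix group
is identified with it. -/
def IsMatGroup.permSubgroup (hK : IsMatGroup K) : Subgroup (Perm (Fin n)) where
  carrier := {σ | permMat σ ∈ K}
  one_mem' := by
    rw [Set.mem_ofPred_eq, permMat_one]
    exact hK.1
  mul_mem' {σ τ} hσ hτ := by
    rw [Set.mem_ofPred_eq, permMat_mul]
    exact hK.2.1 _ hσ _ hτ
  inv_mem' {σ} hσ := by
    rw [Set.mem_ofPred_eq, permMat_inv]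
    exact (hK.2.2 _ hσ).2

theorem IsMatGroup.isPretransitive_permSubgroup (hK : IsMatGroup K) (hperm : ∀ A ∈ K, IsPermMat A)
    (hind : IndecomposableSet K) : MulAction.IsPretransitive hK.permSubgroup (Fin n) := by
  refine ⟨fun x y => ?_⟩
  have hinv : ∀ A ∈ K, ∀ j ∈ MulAction.orbit hK.permSubgroup x, ∀ i, A i j ≠ 0 →
      i ∈ MulAction.orbit hK.permSubgroup x := by
    intro A hA j hj i hij
    obtain ⟨σ, rfl⟩ := hperm A hA
    rw [← permMat_apply_ne_zero_iff.1 hij]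
    exact MulAction.mem_orbit_of_mem_orbit (⟨σ, hA⟩ : hK.permSubgroup) hj
  have huniv := (hind _ hinv).resolve_left (MulAction.nonempty_orbit x).ne_empty
  exact MulAction.mem_orbit_iff.1 (huniv ▸ Set.mem_univ y)

theorem det_eq_one_of_forall_prime (hn : 1 < n) (hK : IsMatGroup K)
    (hperm : ∀ A ∈ K, IsPermMat A) (hind : IndecomposableSet K) {J : Mat n} (hJ : IsSignedDiag J)
    (h : ∀ A ∈ K, (orderOf A).Prime → avgMat A J = 1) : J.det = 1 := by
  obtain ⟨d, hd, rfl⟩ := hJ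
  have : Nontrivial (Fin n) := Fin.nontrivial_iff_two_le.2 hn
  have := hK.isPretransitive_permSubgroup hperm hind
  rw [det_diagonal]
  refine prod_eq_one_of_forall_orbitAvg_eq_one (G := hK.permSubgroup)
    (fun x => sq_eq_one_iff.2 (hd x)) fun g hg => ?_
  rw [← orbitAvg_coe, ← avgMat_permMat_eq_one_iff]
  exact h _ g.2 (by rwa [orderOf_permMat, Subgroup.orderOf_coe])

theorem avgMat_eq_one_of_forall_prime (hK : IsMatGroup K) (hperm : ∀ A ∈ K, IsPermMat A)
    {d : Fin n → ℂ} (h : ∀ A ∈ K, (orderOf A).Prime → avgMat A (diagonal d) = 1)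
    {A : Mat n} (hA : A ∈ K) (hA₁ : A ≠ 1) : avgMat A (diagonal d) = 1 := by
  obtain ⟨σ, rfl⟩ := hperm A hA
  have hσ : σ ≠ 1 := by
    rintro rfl
    exact hA₁ permMat_one
  refine avgMat_permMat_eq_one_iff.2
    (orbitAvg_eq_one_of_forall_prime (isOfFinOrder_of_finite σ) hσ fun r hr => ?_)
  rw [← avgMat_permMat_eq_one_iff]
  exact h _ (hK.permSubgroup.pow_mem hA r) (by rwa [orderOf_permMat])

theorem mem_JsetPlus_iff_forall_prime (hn : 1 < n) (hK : IsMatGroup K)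
    (hperm : ∀ A ∈ K, IsPermMat A) (hind : IndecomposableSet K) {J : Mat n} (hJ : IsSignedDiag J) :
    J ∈ JsetPlus K ↔ ∀ A ∈ K, (orderOf A).Prime → avgMat A J = 1 := by
  constructor
  · rintro ⟨⟨-, havg⟩, hdet⟩ A hA hprime
    have hA₁ : A ≠ 1 := mt orderOf_eq_one_iff.2 hprime.ne_one
    rw [havg A hA hA₁, hdet, one_smul]
  · intro h
    have hdet : J.det = 1 := det_eq_one_of_forall_prime hn hK hperm hind hJ h
    refine ⟨⟨hJ, fun A hA hA₁ => ?_⟩, hdet⟩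
    obtain ⟨d, -, rfl⟩ := hJ
    rw [hdet, one_smul]
    exact avgMat_eq_one_of_forall_prime hK hperm h hA hA₁

end MatGroup

theorem stmt7_general {n : ℕ} (hn : 1 < n) (K : Set (Mat n))
    (hgrp : IsMatGroup K) (hperm : ∀ M ∈ K, IsPermMat M) (hind : IndecomposableSet K)
    {ι : Type*} (G : ι → Mat n)
    (hGmem : ∀ i, G i ∈ K)
    (hGprime : ∀ i, Nat.Prime (orderOf (G i)))
    (hGall : ∀ H ∈ K, Nat.Prime (orderOf H) → ∃ i, ∃ t : ℕ, H = G i ^ t)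
    (J : Mat n) (hJ : IsSignedDiag J) :
    J ∈ JsetPlus K ↔ ∀ i, avgMat (G i) J = 1 := by
  rw [mem_JsetPlus_iff_forall_prime hn hgrp hperm hind hJ]
  obtain ⟨d, -, rfl⟩ := hJ
  constructor
  · exact fun h i => h (G i) (hGmem i) (hGprime i)
  · intro h H hH hprime
    obtain ⟨i, t, rfl⟩ := hGall H hH hprime
    rw [avgMat_pow_of_coprime (hperm _ (hGmem i))
      (coprime_of_prime_orderOf_pow (hGprime i) hprime), h i]

/-- For an indecomposable abelian permutation group `K` (`n > 1` odd),
with `G_1, …, G_k` generators of all the prime-order subgroups of `K`, a signed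
diagonal matrix `J` lies in `J_K^+` iff `avg_{G_i}(J) = I` for all `i`. -/
theorem stmt7 {n : ℕ} (hodd : Odd n) (hn : 1 < n) (K : Set (Mat n))
    (hgrp : IsMatGroup K) (hperm : ∀ M ∈ K, IsPermMat M)
    (hab : ∀ A ∈ K, ∀ B ∈ K, A * B = B * A)
    (hind : IndecomposableSet K)
    {k : ℕ} (G : Fin k → Mat n)
    (hGmem : ∀ i, G i ∈ K)
    (hGprime : ∀ i, Nat.Prime (orderOf (G i)))
    (hGall : ∀ H ∈ K, Nat.Prime (orderOf H) → ∃ i, ∃ t : ℕ, H = G i ^ t)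
    (J : Mat n) (hJ : IsSignedDiag J) :
    J ∈ JsetPlus K ↔ ∀ i, avgMat (G i) J = 1 :=
  stmt7_general hn K hgrp hperm hind G hGmem hGprime hGall J hJ
end

section
/- Let p be a prime, n = p^m, K = 𝒞_n, and let J = diag(J_1, …, J_p) be a block-diagonal matrix with blocks J_i ∈ D_{n/p}(±1) for i = 1, …, p. Then J ∈ J_K^+ if and only if J_1·J_2·…·J_p = I. -/
open Matrix BigOperators
open scoped Classical

/-- The block diagonal matrix `diag(J_1, …, J_p)`, where `J_i` is the diagonal matrix
with diagonal `d i : Fin s → ℂ`, written as a matrix over `Fin n` (`n = p·s`,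
block `i` occupying the rows `i·s, …, i·s + s - 1`). -/
noncomputable def blockDiagOfFun {p s n : ℕ} (h : p * s = n) (d : Fin p → Fin s → ℂ) :
    Mat n :=
  Matrix.diagonal fun t =>
    d (finProdFinEquiv.symm (finCongr h.symm t)).1
      (finProdFinEquiv.symm (finCongr h.symm t)).2

/-!
Index the rows by `ℤ/n`. The elements of `𝒞_n` are the translations by `a ∈ ℤ/n`, and the `t`-th
diagonal entry of the average of a diagonal matrix over the translation by `a` is the product of
the diagonal over the coset `t + ⟨a⟩`. Since a product over a coset of a subgroup splits into
products over cosets of any smaller subgroup, and every nontrivial subgroup of the cyclic `p`-group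
`ℤ/n` contains the subgroup of order `p`, all the conditions defining `J_K^+`, including
`det J = 1`, reduce to those for the single element `a = n/p`. The cosets of `⟨n/p⟩` meet each of
the `p` blocks in the same position, so these conditions say that `J_1 ⋯ J_p = I`.
-/

section CyclicGroup

open AddSubgroup

variable {A : Type*} [AddGroup A]

theorem mem_zmultiples_of_addOrderOf_dvd [Finite A] [IsAddCyclic A] {a b : A}
    (h : addOrderOf b ∣ addOrderOf a) : b ∈ zmultiples a := by
  have := Fintype.ofFinite A
  let torsion : Finset A := {x | addOrderOf a • x = 0}
  have multiples_subset : (zmultiples a : Set A).toFinset ⊆ torsion := fun x hx ↦ by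
    simpa [torsion] using addOrderOf_dvd_iff_nsmul_eq_zero.1
      (addOrderOf_dvd_of_mem_zmultiples (Set.mem_toFinset.1 hx))
  have card_le : torsion.card ≤ (zmultiples a : Set A).toFinset.card := by
    simpa [torsion, Fintype.card_zmultiples] using
      IsAddCyclic.card_nsmul_eq_zero_le (addOrderOf_pos a)
  have b_mem : b ∈ torsion := by
    simpa [torsion] using addOrderOf_dvd_iff_nsmul_eq_zero.1 h
  rw [← Finset.eq_of_subset_of_card_le multiples_subset card_le] at b_mem
  exact Set.mem_toFinset.1 b_mem

theorem zmultiples_le_of_addOrderOf_eq_prime [Finite A] [IsAddCyclic A] {p m : ℕ}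
    (hp : p.Prime) (hA : Nat.card A = p ^ m) {a b : A} (hb : addOrderOf b = p) (ha : a ≠ 0) :
    zmultiples b ≤ zmultiples a := by
  obtain ⟨k, -, hk⟩ := (Nat.dvd_prime_pow hp).1 (hA ▸ addOrderOf_dvd_natCard a)
  have hk0 : k ≠ 0 := by
    rintro rfl
    exact ha (AddMonoid.addOrderOf_eq_one_iff.1 (hk.trans (pow_zero p)))
  refine zmultiples_le_of_mem (mem_zmultiples_of_addOrderOf_dvd ?_)
  rw [hb, hk]
  exact dvd_pow_self p hk0

end CyclicGroup

section CosetProduct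

open AddSubgroup

variable {A M : Type*} [AddGroup A] [CommMonoid M]

theorem prod_eq_one_of_prod_coset_eq_one [Fintype A] (H : AddSubgroup A) [Fintype H] {f : A → M}
    (hf : ∀ a, ∏ h : H, f (a + h) = 1) : ∏ a, f a = 1 := by
  obtain ⟨S, hS, -⟩ := H.exists_isComplement_left 0
  calc ∏ a, f a = ∏ x : S × H, f (x.1 + x.2) := (Fintype.prod_bijective _ hS _ _ fun _ ↦ rfl).symm
    _ = ∏ s : S, ∏ h : H, f (s + h) := Fintype.prod_prod_type _
    _ = 1 := Finset.prod_eq_one fun s _ ↦ hf s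

theorem prod_coset_eq_one_of_le {H L : AddSubgroup A} [Fintype H] [Fintype L] (hHL : H ≤ L)
    {f : A → M} (hf : ∀ a, ∏ h : H, f (a + h) = 1) (a : A) : ∏ l : L, f (a + l) = 1 := by
  refine prod_eq_one_of_prod_coset_eq_one (H.addSubgroupOf L) fun l ↦ ?_
  rw [← hf (a + l)]
  exact Fintype.prod_equiv (addSubgroupOfEquivOfLe hHL).toEquiv _ _ fun h ↦
    congrArg f (add_assoc a l h).symm

theorem prod_zmultiples_eq_prod_range {a : A} [Fintype (zmultiples a)] (ha : IsOfFinAddOrder a)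
    (f : A → M) : ∏ g : zmultiples a, f g = ∏ l ∈ Finset.range (addOrderOf a), f (l • a) := by
  rw [← Fin.prod_univ_eq_prod_range (fun l ↦ f (l • a))]
  exact (Fintype.prod_equiv (finEquivZMultiples ha) _ _ fun _ ↦ rfl).symm

end CosetProduct

section PermutationMatrix

section General

variable {ι R : Type*} [Fintype ι] [DecidableEq ι]

theorem permMatrixHom_apply_apply [NonAssocSemiring R] (σ : Equiv.Perm ι) (i j : ι) :
    (permMatrixHom σ : Matrix ι ι R) i j = if i = σ j then 1 else 0 := by
  simp [PEquiv.toMatrix_apply, Equiv.eq_symm_apply, eq_comm]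

theorem permMatrixHom_injective [NonAssocSemiring R] [Nontrivial R] :
    Function.Injective (permMatrixHom : Equiv.Perm ι →* Matrix ι ι R) := by
  intro σ τ h
  ext j
  simpa [permMatrixHom_apply_apply] using congrFun (congrFun h (σ j)) j

theorem inv_permMatrixHom_mul_diagonal_mul [CommRing R] (σ : Equiv.Perm ι) (d : ι → R) :
    (permMatrixHom σ)⁻¹ * diagonal d * permMatrixHom σ = diagonal (d ∘ σ) := by
  have inv_mul : (permMatrixHom σ⁻¹ : Matrix ι ι R) * permMatrixHom σ = 1 := by
    rw [← map_mul, inv_mul_cancel, map_one]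
  have diagonal_mul_comm : diagonal d * permMatrixHom σ = permMatrixHom σ * diagonal (d ∘ σ) := by
    ext i j
    rw [diagonal_mul, mul_diagonal, permMatrixHom_apply_apply]
    split_ifs with hij <;> simp [hij]
  rw [inv_eq_left_inv inv_mul, mul_assoc, diagonal_mul_comm, ← mul_assoc, inv_mul, one_mul]

end General

theorem avgMat_permMatrixHom_diagonal {n : ℕ} (σ : Equiv.Perm (Fin n)) (d : Fin n → ℂ) :
    avgMat (permMatrixHom σ) (diagonal d) =
      diagonal fun t ↦ ∏ l ∈ Finset.range (orderOf σ), d ((σ ^ l) t) := by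
  rw [avgMat, orderOf_injective _ permMatrixHom_injective]
  induction orderOf σ with
  | zero => simp
  | succ r ih =>
    rw [List.prod_range_succ, ih, ← map_pow, inv_permMatrixHom_mul_diagonal_mul,
      diagonal_mul_diagonal]
    simp only [Finset.prod_range_succ, Function.comp_apply]

end PermutationMatrix

section Translation

theorem addRight_eq_one_iff {A : Type*} [AddGroup A] {a : A} : Equiv.addRight a = 1 ↔ a = 0 := by
  simp [Equiv.ext_iff]

theorem orderOf_addRight {A : Type*} [AddGroup A] (a : A) :
    orderOf (Equiv.addRight a) = addOrderOf a :=
  eq_of_forall_dvd fun k ↦ by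
    rw [orderOf_dvd_iff_pow_eq_one, Equiv.nsmul_addRight, addRight_eq_one_iff,
      addOrderOf_dvd_iff_nsmul_eq_zero]

variable {n : ℕ} [NeZero n]

/-- The permutation matrix of the translation `t ↦ t + a` of `ℤ/n`, realized as `Fin n`. These
matrices are the elements of `𝒞_n`, see `mem_cycSet_iff`. -/
def translationMat (a : Fin n) : Mat n := permMatrixHom (Equiv.addRight a)

theorem translationMat_eq_one_iff {a : Fin n} : translationMat a = 1 ↔ a = 0 := by
  rw [translationMat, map_eq_one_iff _ permMatrixHom_injective, addRight_eq_one_iff]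

theorem avgMat_translationMat_diagonal (a : Fin n) (d : Fin n → ℂ) :
    avgMat (translationMat a) (diagonal d) =
      diagonal fun t ↦ ∏ g : AddSubgroup.zmultiples a, d (t + g) := by
  rw [translationMat, avgMat_permMatrixHom_diagonal]
  congr! 2 with t
  rw [prod_zmultiples_eq_prod_range (isOfFinAddOrder_of_finite a) fun g ↦ d (t + g),
    orderOf_addRight]
  simp only [Equiv.nsmul_addRight, Equiv.coe_addRight]

theorem val_nsmul_fin_one (k : ℕ) : ((k • (1 : Fin n) : Fin n) : ℕ) = k % n := by
  induction k with
  | zero => simp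
  | succ k ih => rw [succ_nsmul, Fin.val_add, ih, Fin.val_one', ← Nat.add_mod]

theorem val_nsmul_fin_one_self (a : Fin n) : (a : ℕ) • (1 : Fin n) = a :=
  Fin.ext ((val_nsmul_fin_one _).trans (Nat.mod_eq_of_lt a.isLt))

theorem mem_zmultiples_fin_one (a : Fin n) : a ∈ AddSubgroup.zmultiples (1 : Fin n) :=
  ⟨(a : ℕ), (natCast_zsmul _ _).trans (val_nsmul_fin_one_self a)⟩

instance isAddCyclic_fin : IsAddCyclic (Fin n) := ⟨1, mem_zmultiples_fin_one⟩

theorem addOrderOf_fin_one : addOrderOf (1 : Fin n) = n :=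
  (addOrderOf_eq_card_of_forall_mem_zmultiples mem_zmultiples_fin_one).trans (Nat.card_fin n)

theorem cycMat_pow (k : ℕ) : cycMat n ^ k = translationMat (k • 1) := by
  have cycMat_eq : cycMat n = permMatrixHom (Equiv.addRight 1) := by
    ext i j
    rw [permMatrixHom_apply_apply]
    simp [cycMat, Fin.ext_iff, Fin.val_add]
  rw [cycMat_eq, ← map_pow, Equiv.nsmul_addRight, translationMat]

theorem mem_cycSet_iff {G : Mat n} : G ∈ cycSet n ↔ ∃ a : Fin n, G = translationMat a :=
  ⟨fun ⟨k, hk⟩ ↦ ⟨k • 1, hk.trans (cycMat_pow k)⟩,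
    fun ⟨a, ha⟩ ↦ ⟨a, by rw [cycMat_pow, val_nsmul_fin_one_self, ha]⟩⟩

end Translation

section SignedDiagonal

open AddSubgroup

variable {n : ℕ}

theorem isSignedDiag_diagonal_iff {d : Fin n → ℂ} :
    IsSignedDiag (diagonal d) ↔ ∀ i, d i = 1 ∨ d i = -1 :=
  ⟨fun ⟨_, hd, h⟩ ↦ diagonal_injective h ▸ hd, fun hd ↦ ⟨d, hd, rfl⟩⟩

theorem diagonal_mem_JsetPlus_cycSet_iff [NeZero n] {d : Fin n → ℂ} :
    diagonal d ∈ JsetPlus (cycSet n) ↔ (∀ i, d i = 1 ∨ d i = -1) ∧ ∏ i, d i = 1 ∧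
      ∀ a : Fin n, a ≠ 0 → ∀ t, ∏ g : zmultiples a, d (t + g) = 1 := by
  have avgMat_eq_one_iff (a : Fin n) : avgMat (translationMat a) (diagonal d) = 1 ↔
      ∀ t, ∏ g : zmultiples a, d (t + g) = 1 := by
    rw [avgMat_translationMat_diagonal, diagonal_eq_one, funext_iff]
    rfl
  calc diagonal d ∈ JsetPlus (cycSet n)
      ↔ (IsSignedDiag (diagonal d) ∧
          ∀ G ∈ cycSet n, G ≠ 1 → avgMat G (diagonal d) = (∏ i, d i) • (1 : Mat n)) ∧
        ∏ i, d i = 1 := by rw [← det_diagonal]; rfl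
    _ ↔ IsSignedDiag (diagonal d) ∧ ∏ i, d i = 1 ∧
          ∀ G ∈ cycSet n, G ≠ 1 → avgMat G (diagonal d) = 1 := by
      rw [and_assoc, and_comm (b := _ = _)]
      exact and_congr_right fun _ ↦ and_congr_right fun hdet ↦ by rw [hdet, one_smul]
    _ ↔ _ := by
      simp only [isSignedDiag_diagonal_iff, mem_cycSet_iff, forall_exists_index,
        forall_eq_apply_imp_iff, ne_eq, translationMat_eq_one_iff, avgMat_eq_one_iff]

theorem diagonal_mem_JsetPlus_cycSet_iff_of_prime_pow [NeZero n] {p m : ℕ} (hp : p.Prime)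
    (hn : n = p ^ m) {b : Fin n} (hb : addOrderOf b = p) {d : Fin n → ℂ} :
    diagonal d ∈ JsetPlus (cycSet n) ↔
      (∀ i, d i = 1 ∨ d i = -1) ∧ ∀ t, ∏ g : zmultiples b, d (t + g) = 1 := by
  have hb0 : b ≠ 0 := by
    rintro rfl
    exact hp.ne_one (hb.symm.trans addOrderOf_zero)
  rw [diagonal_mem_JsetPlus_cycSet_iff]
  refine and_congr_right fun _ ↦ ⟨fun h ↦ h.2 b hb0, fun h ↦ ⟨?_, fun a ha ↦ ?_⟩⟩
  · exact prod_eq_one_of_prod_coset_eq_one _ h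
  · exact prod_coset_eq_one_of_le
      (zmultiples_le_of_addOrderOf_eq_prime hp ((Nat.card_fin n).trans hn) hb ha) h

end SignedDiagonal

section Block

variable {p s : ℕ} [NeZero p]

theorem modNat_surjective : Function.Surjective (Fin.modNat : Fin (p * s) → Fin s) :=
  fun x ↦ ⟨finProdFinEquiv (0, x), congrArg Prod.snd (finProdFinEquiv.symm_apply_apply (0, x))⟩

variable [NeZero s]

theorem addOrderOf_nsmul_fin_one : addOrderOf (s • (1 : Fin (p * s))) = p := by
  rw [addOrderOf_nsmul_of_dvd (NeZero.ne s) (by simp [addOrderOf_fin_one]), addOrderOf_fin_one,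
    Nat.mul_div_cancel _ (NeZero.pos s)]

theorem divNat_add_nsmul (t : Fin (p * s)) (l : Fin p) :
    (t + (l : ℕ) • s • (1 : Fin (p * s))).divNat = t.divNat + l := by
  ext
  rw [← mul_nsmul, Fin.coe_divNat, Fin.val_add, val_nsmul_fin_one, Nat.add_mod_mod,
    Nat.mod_mul_left_div_self, Nat.add_mul_div_left _ _ (NeZero.pos s), Fin.val_add,
    Fin.coe_divNat]

theorem modNat_add_nsmul (t : Fin (p * s)) (l : ℕ) :
    (t + l • s • (1 : Fin (p * s))).modNat = t.modNat := by
  ext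
  simp [← mul_nsmul, Fin.val_add, val_nsmul_fin_one]

theorem prod_zmultiples_divNat_modNat {M : Type*} [CommMonoid M] (d : Fin p → Fin s → M)
    (t : Fin (p * s)) :
    ∏ g : AddSubgroup.zmultiples (s • (1 : Fin (p * s))), d (t + g).divNat (t + g).modNat =
      ∏ i, d i t.modNat := by
  let f (a : Fin (p * s)) : M := d (t + a).divNat (t + a).modNat
  calc ∏ g : AddSubgroup.zmultiples (s • (1 : Fin (p * s))), f g
      = ∏ l ∈ Finset.range p, f (l • s • 1) := by
        rw [prod_zmultiples_eq_prod_range (isOfFinAddOrder_of_finite _) f, addOrderOf_nsmul_fin_one]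
    _ = ∏ l : Fin p, f ((l : ℕ) • s • 1) := (Fin.prod_univ_eq_prod_range _ p).symm
    _ = ∏ l : Fin p, d (t.divNat + l) t.modNat := by
        simp only [f, divNat_add_nsmul, modNat_add_nsmul]
    _ = ∏ i, d i t.modNat := Equiv.prod_comp (Equiv.addLeft t.divNat) fun i ↦ d i t.modNat

end Block

/-- For `n = p^m` (`p` prime) and `K = 𝒞_n`, a matrix
`J = diag(J_1, …, J_p)` with `J_i ∈ D_{n/p}(±1)` lies in `J_K^+` iff
`J_1 ⋯ J_p = I`. -/
theorem stmt8 {p m n : ℕ} (hp : p.Prime) (hm : 1 ≤ m) (hn : n = p ^ m)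
    (h : p * p ^ (m - 1) = n)
    (d : Fin p → Fin (p ^ (m - 1)) → ℂ)
    (hd : ∀ i x, d i x = 1 ∨ d i x = -1) :
    blockDiagOfFun h d ∈ JsetPlus (cycSet n) ↔ ∀ x, ∏ i, d i x = 1 := by
  have : NeZero p := ⟨hp.ne_zero⟩
  subst h
  have block_eq : blockDiagOfFun rfl d = diagonal fun t ↦ d t.divNat t.modNat := rfl
  rw [block_eq, diagonal_mem_JsetPlus_cycSet_iff_of_prime_pow hp hn addOrderOf_nsmul_fin_one,
    and_iff_right fun _ ↦ hd _ _]
  simp only [prod_zmultiples_divNat_modNat]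
  exact (modNat_surjective.forall (p := fun x ↦ ∏ i, d i x = 1)).symm
end

section
/- Let n > 1 be odd. Then the groups of signed diagonal matrices J_n^+ and J_n are not scalar, i.e., each contains a matrix that is not a scalar multiple of the identity. -/
open Matrix BigOperators
open scoped Classical

/-!
Let `R` be a finite commutative ring of characteristic 2 in which some `z ≠ 1` is a root of the
`n`-th cyclotomic polynomial, such as `𝔽₂[X] / (Φₙ)` for `n > 2`, and let `ψ` be an additive
character of `R`. The diagonal matrix with entries `ψ (a * z ^ i)` is signed, it is additive in `a`,
and conjugating it by `C_n` replaces `a` by `a * z`. Averaging over `C_n ^ k ≠ 1` therefore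
multiplies `a` by a geometric sum in `z ^ k`, which vanishes because `Φₙ` divides it already over
`ℤ`; the determinant is `1` for the same reason. Choosing `ψ` with `ψ z ≠ ψ 1` makes the matrix
for `a = 1` non-scalar.
-/

section Cyclotomic

open Polynomial

theorem dvd_of_cyclotomic_dvd_X_pow_sub_one {n k : ℕ} (hn : 0 < n)
    (h : cyclotomic n ℤ ∣ X ^ k - 1) : n ∣ k := by
  have hζ := Complex.isPrimitiveRoot_exp n hn.ne'
  have hdvd : cyclotomic n ℂ ∣ X ^ k - 1 := by
    simpa using Polynomial.map_dvd (Int.castRingHom ℂ) h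
  have hroot := (hζ.isRoot_cyclotomic hn).dvd hdvd
  exact (hζ.pow_eq_one_iff_dvd k).1 (by simpa [sub_eq_zero] using hroot)

theorem cyclotomic_dvd_geom_sum (R : Type*) [CommRing R] {n k m : ℕ} (hn : 0 < n)
    (hk : ¬n ∣ k) (hkm : n ∣ k * m) :
    cyclotomic n R ∣ ∑ l ∈ Finset.range m, (X ^ k) ^ l := by
  have hprime : Prime (cyclotomic n ℤ) := (cyclotomic.irreducible hn).prime
  have hmul : cyclotomic n ℤ ∣ (∑ l ∈ Finset.range m, (X ^ k) ^ l) * (X ^ k - 1) := by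
    obtain ⟨c, hc⟩ := hkm
    rw [geom_sum_mul, ← pow_mul, hc]
    exact (cyclotomic.dvd_X_pow_sub_one n ℤ).trans (pow_one_sub_dvd_pow_mul_sub_one X n c)
  have hint : cyclotomic n ℤ ∣ ∑ l ∈ Finset.range m, (X ^ k) ^ l :=
    (hprime.dvd_or_dvd hmul).resolve_right (hk ∘ dvd_of_cyclotomic_dvd_X_pow_sub_one hn)
  simpa [Polynomial.map_sum] using Polynomial.map_dvd (Int.castRingHom R) hint

variable {R : Type*} [CommRing R] {n : ℕ} {z : R}

theorem pow_eq_one_of_isRoot_cyclotomic (hz : (cyclotomic n R).IsRoot z) : z ^ n = 1 := by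
  simpa [sub_eq_zero] using hz.dvd (cyclotomic.dvd_X_pow_sub_one n R)

theorem geom_sum_eq_zero_of_isRoot_cyclotomic {k m : ℕ} (hz : (cyclotomic n R).IsRoot z)
    (hn : 0 < n) (hk : ¬n ∣ k) (hkm : n ∣ k * m) :
    ∑ l ∈ Finset.range m, (z ^ k) ^ l = 0 := by
  simpa [eval_finsetSum] using hz.dvd (cyclotomic_dvd_geom_sum R hn hk hkm)

theorem root_cyclotomic_ne_one {K : Type*} [CommRing K] [Nontrivial K] {n : ℕ} (hn : 2 < n) :
    AdjoinRoot.root (cyclotomic n K) ≠ 1 := by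
  have htot : 1 < n.totient := by
    have hpos := Nat.totient_pos.2 (show 0 < n by omega)
    have hne : n.totient ≠ 1 := by rw [Ne, Nat.totient_eq_one_iff]; omega
    omega
  have hmk : AdjoinRoot.mk (cyclotomic n K) (X - C 1) ≠ 0 :=
    AdjoinRoot.mk_ne_zero_of_natDegree_lt (cyclotomic.monic n K) (X_sub_C_ne_zero 1)
      (by rwa [natDegree_X_sub_C, natDegree_cyclotomic])
  simpa [sub_eq_zero] using hmk

end Cyclotomic

theorem addChar_sum_eq_prod {ι A M : Type*} [AddCommMonoid A] [CommMonoid M] (ψ : AddChar A M)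
    (s : Finset ι) (f : ι → A) : ψ (∑ i ∈ s, f i) = ∏ i ∈ s, ψ (f i) :=
  map_prod ψ.toMonoidHom (fun i => Multiplicative.ofAdd (f i)) s

theorem addChar_apply_eq_one_or_neg_one {A M : Type*} [Semiring A] [CharP A 2] [CommRing M]
    [NoZeroDivisors M] (ψ : AddChar A M) (a : A) : ψ a = 1 ∨ ψ a = -1 := by
  rw [← mul_self_eq_one_iff, ← ψ.map_add_eq_mul, CharTwo.add_self_eq_zero, ψ.map_zero_eq_one]

theorem exists_addChar_apply_ne {A : Type*} [AddCommGroup A] [Finite A] {a b : A} (h : a ≠ b) :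
    ∃ ψ : AddChar A ℂ, ψ a ≠ ψ b := by
  obtain ⟨ψ, hψ⟩ := AddChar.exists_apply_ne_zero.2 (sub_ne_zero.2 h)
  refine ⟨ψ, fun hab => hψ ?_⟩
  rw [ψ.map_sub_eq_div, hab, div_self (ψ.val_isUnit b).ne_zero]

section CyclicMatrix

variable {n : ℕ}

theorem cycMat_pow_apply (k : ℕ) (i j : Fin n) :
    (cycMat n ^ k) i j = if (i : ℕ) = (j + k) % n then 1 else 0 := by
  induction k generalizing j with
  | zero => simp [Matrix.one_apply, Nat.mod_eq_of_lt j.2, Fin.ext_iff]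
  | succ k ih =>
    let j' : Fin n := ⟨(j + 1) % n, Nat.mod_lt _ j.pos⟩
    have hcol (l : Fin n) : cycMat n l j = if l = j' then 1 else 0 := by
      simp [cycMat, j', Fin.ext_iff]
    simp [pow_succ, Matrix.mul_apply, hcol, ih, j', add_assoc, add_comm 1 k]

theorem cycMat_pow_eq_one_iff (hn : 0 < n) {k : ℕ} : cycMat n ^ k = 1 ↔ n ∣ k := by
  constructor
  · intro h
    have h₀ := cycMat_pow_apply k ⟨0, hn⟩ ⟨0, hn⟩
    rw [h, Matrix.one_apply_eq] at h₀
    by_contra hk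
    exact one_ne_zero (h₀.trans (if_neg (by simpa [eq_comm, ← Nat.dvd_iff_mod_eq_zero] using hk)))
  · intro hk
    ext i j
    simp [cycMat_pow_apply, Matrix.one_apply, Fin.ext_iff, Nat.add_mod, Nat.mod_eq_zero_of_dvd hk,
      Nat.mod_eq_of_lt j.2]

theorem dvd_mul_orderOf_cycMat_pow (hn : 0 < n) (k : ℕ) : n ∣ k * orderOf (cycMat n ^ k) := by
  rw [← cycMat_pow_eq_one_iff hn, pow_mul, pow_orderOf_eq_one]

theorem isUnit_cycMat (hn : 0 < n) : IsUnit (cycMat n) :=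
  .of_pow_eq_one ((cycMat_pow_eq_one_iff hn).2 dvd_rfl) hn.ne'

end CyclicMatrix

/-- The diagonal matrix with entries `ψ (a * z ^ i)`, `0 ≤ i < n`, as a matrix-valued additive
character in `a`. When `z ^ n = 1`, conjugation by `cycMat n` acts on it as multiplication of `a`
by `z`. -/
def diagChar {R : Type*} [CommRing R] (n : ℕ) (ψ : AddChar R ℂ) (z : R) : AddChar R (Mat n) where
  toFun a := Matrix.diagonal fun i : Fin n => ψ (a * z ^ (i : ℕ))
  map_zero_eq_one' := by simp
  map_add_eq_mul' a b := by simp [Matrix.diagonal_mul_diagonal, add_mul, ψ.map_add_eq_mul]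

namespace diagChar

variable {R : Type*} [CommRing R] {n : ℕ} {ψ : AddChar R ℂ} {z : R}

theorem apply_eq_diagonal (a : R) :
    diagChar n ψ z a = Matrix.diagonal fun i : Fin n => ψ (a * z ^ (i : ℕ)) :=
  rfl

theorem det_apply (a : R) :
    (diagChar n ψ z a).det = ψ (a * ∑ i ∈ Finset.range n, z ^ i) := by
  rw [apply_eq_diagonal, Matrix.det_diagonal, ← Fin.sum_univ_eq_sum_range (z ^ ·),
    Finset.mul_sum, addChar_sum_eq_prod]

theorem isSignedDiag [CharP R 2] (a : R) : IsSignedDiag (diagChar n ψ z a) :=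
  ⟨_, fun _ => addChar_apply_eq_one_or_neg_one ψ _, rfl⟩

theorem ne_smul_one (hn : 1 < n) (hψ : ψ z ≠ ψ 1) (c : ℂ) : diagChar n ψ z 1 ≠ c • 1 := by
  intro h
  have hentry (i : Fin n) : ψ (z ^ (i : ℕ)) = c := by
    simpa [apply_eq_diagonal] using congrFun₂ h i i
  have h₀ : ψ 1 = c := by simpa using hentry ⟨0, by omega⟩
  have h₁ : ψ z = c := by simpa using hentry ⟨1, hn⟩
  exact hψ (h₁.trans h₀.symm)

theorem mul_cycMat_pow (hz : z ^ n = 1) (k : ℕ) (a : R) :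
    diagChar n ψ z a * cycMat n ^ k = cycMat n ^ k * diagChar n ψ z (a * z ^ k) := by
  ext i j
  simp only [apply_eq_diagonal, Matrix.diagonal_mul, Matrix.mul_diagonal, cycMat_pow_apply]
  split_ifs with hij
  · rw [hij, ← pow_eq_pow_mod _ hz, mul_one, one_mul, mul_assoc, ← pow_add, add_comm]
  · simp

theorem conj_cycMat_pow (hn : 0 < n) (hz : z ^ n = 1) (k : ℕ) (a : R) :
    (cycMat n ^ k)⁻¹ * diagChar n ψ z a * cycMat n ^ k = diagChar n ψ z (a * z ^ k) := by
  have hdet := (Matrix.isUnit_iff_isUnit_det _).1 ((isUnit_cycMat hn).pow k)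
  rw [mul_assoc, mul_cycMat_pow hz, Matrix.nonsing_inv_mul_cancel_left _ _ hdet]

theorem avgMat_cycMat_pow (hn : 0 < n) (hz : z ^ n = 1) (k : ℕ) (a : R) :
    avgMat (cycMat n ^ k) (diagChar n ψ z a) =
      diagChar n ψ z (a * ∑ l ∈ Finset.range (orderOf (cycMat n ^ k)), (z ^ k) ^ l) := by
  rw [avgMat]
  induction orderOf (cycMat n ^ k) with
  | zero => simp
  | succ m ih =>
    rw [List.prod_range_succ, ih, ← pow_mul, conj_cycMat_pow hn hz, Finset.sum_range_succ,
      mul_add, AddChar.map_add_eq_mul, pow_mul]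

theorem mem_JsetPlus [CharP R 2] (hn : 1 < n) (hz : (Polynomial.cyclotomic n R).IsRoot z) (a : R) :
    diagChar n ψ z a ∈ JsetPlus (cycSet n) := by
  have hpos : 0 < n := by omega
  have hdet : (diagChar n ψ z a).det = 1 := by
    have hsum : ∑ i ∈ Finset.range n, z ^ i = 0 := by
      simpa using geom_sum_eq_zero_of_isRoot_cyclotomic (k := 1) hz hpos
        (Nat.not_dvd_of_pos_of_lt one_pos hn) (by simp)
    rw [det_apply, hsum, mul_zero, ψ.map_zero_eq_one]
  refine ⟨⟨isSignedDiag a, ?_⟩, hdet⟩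
  rintro _ ⟨k, rfl⟩ hk
  rw [avgMat_cycMat_pow hpos (pow_eq_one_of_isRoot_cyclotomic hz),
    geom_sum_eq_zero_of_isRoot_cyclotomic hz hpos (mt (cycMat_pow_eq_one_iff hpos).2 hk)
      (dvd_mul_orderOf_cycMat_pow hpos k),
    mul_zero, AddChar.map_zero_eq_one, hdet, one_smul]

end diagChar

theorem stmt11_general {n : ℕ} (hn : 2 < n) :
    (∃ J ∈ JsetPlus (cycSet n), ∀ c : ℂ, J ≠ c • (1 : Mat n)) ∧
    (∃ J ∈ Jset (cycSet n), ∀ c : ℂ, J ≠ c • (1 : Mat n)) := by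
  let Φ := Polynomial.cyclotomic n (ZMod 2)
  let R := AdjoinRoot Φ
  let z : R := AdjoinRoot.root Φ
  have hz : (Polynomial.cyclotomic n R).IsRoot z := by
    simpa [Φ] using AdjoinRoot.isRoot_root Φ
  have hz₁ : z ≠ 1 := root_cyclotomic_ne_one hn
  have : Nontrivial R := nontrivial_of_ne z 1 hz₁
  have : CharP R 2 := charP_of_injective_algebraMap (algebraMap (ZMod 2) R).injective 2
  have : Module.Finite (ZMod 2) R := (Polynomial.cyclotomic.monic n (ZMod 2)).finite_adjoinRoot
  have : Finite R := Module.finite_of_finite (ZMod 2)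
  obtain ⟨ψ, hψ⟩ := exists_addChar_apply_ne hz₁
  have hJ : diagChar n ψ z 1 ∈ JsetPlus (cycSet n) := diagChar.mem_JsetPlus (by omega) hz 1
  have hscalar := diagChar.ne_smul_one (n := n) (by omega) hψ
  exact ⟨⟨_, hJ, hscalar⟩, ⟨_, hJ.1, hscalar⟩⟩

/-- For odd `n > 1`, the groups `J_n^+` and `J_n` are not scalar. -/
theorem stmt11 {n : ℕ} (hodd : Odd n) (hn : 1 < n) :
    (∃ J ∈ JsetPlus (cycSet n), ∀ c : ℂ, J ≠ c • (1 : Mat n)) ∧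
    (∃ J ∈ Jset (cycSet n), ∀ c : ℂ, J ≠ c • (1 : Mat n)) :=
  stmt11_general (by obtain ⟨m, rfl⟩ := hodd; omega)
end
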